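/- Let f be a non-wandering homeomorphism of the open annulus 𝔸 = 𝕋¹ × ℝ homotopic to the identity with no periodic points, and let C ⊆ 𝔸 be an f-invariant circloid. Then C has empty interior. -/

import Mathlib

open Filter Topology

local notation "⟪" x ", " y "⟫" => @inner ℝ _ _ x y

noncomputable section

/-- The open annulus `𝔸 = 𝕋¹ × ℝ`. -/
abbrev Ann := AddCircle (1 : ℝ) × ℝ

/-- `S ⊆ 𝔸` is unbounded from above in the `ℝ`-coordinate. -/
def UnbAbove (S : Set Ann) : Prop := ¬ BddAbove (Prod.snd '' S)

/-- `S ⊆ 𝔸` is unbounded from below in the `ℝ`-coordinate. -/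
def UnbBelow (S : Set Ann) : Prop := ¬ BddBelow (Prod.snd '' S)

/-- `S ⊆ 𝔸` is bounded (equivalently, bounded in the `ℝ`-coordinate). -/
def BoundedA (S : Set Ann) : Prop := BddAbove (Prod.snd '' S) ∧ BddBelow (Prod.snd '' S)

/-- `E ⊆ 𝔸` is essential: no connected component of its complement is unbounded both
above and below. -/
def EssentialA (E : Set Ann) : Prop :=
  ∀ x ∈ Eᶜ, ¬ (UnbAbove (connectedComponentIn Eᶜ x) ∧ UnbBelow (connectedComponentIn Eᶜ x))

/-- An annular continuum: a compact connected set whose complement has exactly two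
connected components, both unbounded. -/
def IsAnnularContinuum (E : Set Ann) : Prop :=
  IsCompact E ∧ IsConnected E ∧
  (∀ x ∈ Eᶜ, ¬ BoundedA (connectedComponentIn Eᶜ x)) ∧
  ∃ x y, x ∈ Eᶜ ∧ y ∈ Eᶜ ∧ connectedComponentIn Eᶜ x ≠ connectedComponentIn Eᶜ y ∧
    ∀ z ∈ Eᶜ, connectedComponentIn Eᶜ z = connectedComponentIn Eᶜ x ∨
      connectedComponentIn Eᶜ z = connectedComponentIn Eᶜ y

/-- A circloid: an annular continuum containing no strictly smaller annular continuum. -/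
def IsCircloidA (C : Set Ann) : Prop :=
  IsAnnularContinuum C ∧ ∀ E ⊆ C, IsAnnularContinuum E → E = C

/-- `ℒ(U)`: the connected component of `𝔸 \ cl(U)` unbounded from below (for a
generating set it is unique; in general we take the union of all components of
`𝔸 \ cl(U)` unbounded from below). -/
def lowerComp (U : Set Ann) : Set Ann :=
  {z | z ∈ (closure U)ᶜ ∧ UnbBelow (connectedComponentIn (closure U)ᶜ z)}

/-- `𝒰(L)`: the connected component of `𝔸 \ cl(L)` unbounded from above. -/
def upperComp (L : Set Ann) : Set Ann :=
  {z | z ∈ (closure L)ᶜ ∧ UnbAbove (connectedComponentIn (closure L)ᶜ z)}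

/-- An upper generating set: bounded from below with essential closure. -/
def UpperGen (U : Set Ann) : Prop := BddBelow (Prod.snd '' U) ∧ EssentialA (closure U)

/-- A lower generating set: bounded from above with essential closure. -/
def LowerGen (L : Set Ann) : Prop := BddAbove (Prod.snd '' L) ∧ EssentialA (closure L)

/-- `𝒞⁻(U) = 𝔸 \ (𝒰ℒ(U) ∪ ℒ𝒰ℒ(U))`. -/
def Cminus (U : Set Ann) : Set Ann :=
  (upperComp (lowerComp U) ∪ lowerComp (upperComp (lowerComp U)))ᶜ

/-- `𝒞⁺(L) = 𝔸 \ (ℒ𝒰(L) ∪ 𝒰ℒ𝒰(L))`. -/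
def Cplus (L : Set Ann) : Set Ann :=
  (lowerComp (upperComp L) ∪ upperComp (lowerComp (upperComp L)))ᶜ

/-- `f` is non-wandering: no nonempty open set `U` satisfies `fⁿ(U) ∩ U = ∅` for all
`n ≥ 1`. -/
def NonWandering {X : Type*} [TopologicalSpace X] (f : X → X) : Prop :=
  ∀ U : Set X, IsOpen U → U.Nonempty → ∃ n : ℕ, 1 ≤ n ∧ (f^[n] '' U ∩ U).Nonempty

/-- `f` has a periodic point. -/
def HasPeriodicPoint {X : Type*} (f : X → X) : Prop :=
  ∃ (x : X) (q : ℕ), 1 ≤ q ∧ f^[q] x = x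

/-- The covering map `p : ℝ² → 𝔸`. -/
def projA (z : ℝ × ℝ) : Ann := ((z.1 : AddCircle (1 : ℝ)), z.2)

/-- `G` is a lift of `f : 𝔸 → 𝔸`:  `p ∘ G = f ∘ p` and `G (z + (1,0)) = G z + (1,0)`.
The existence of such a lift expresses that `f` is homotopic to the identity. -/
def IsLiftA (f : Ann ≃ₜ Ann) (G : (ℝ × ℝ) ≃ₜ (ℝ × ℝ)) : Prop :=
  (∀ z : ℝ × ℝ, projA (G z) = f (projA z)) ∧
  ∀ z : ℝ × ℝ, G (z + (1, 0)) = G z + (1, 0)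

/-- A simple closed curve in `𝔸`: a subset homeomorphic to the circle. -/
def IsSimpleClosedCurveA (Γ : Set Ann) : Prop :=
  ∃ e : AddCircle (1 : ℝ) → Ann, IsEmbedding e ∧ Γ = Set.range e

/-!
Suppose `interior C` is nonempty and let `D` be a component of its preimage in the plane. If `D`
contained a point together with a translate by `(k, 0)`, `k ≠ 0`, then `interior C` would contain
an essential loop, whose filling is an annular continuum strictly smaller than `C`. So `D` is
disjoint from its deck translates, and recurrence of `f` produces a lift `H = Tᵏ ∘ Gⁿ` of an
iterate of `f`, where `T` is the unit translation, which is non-wandering on `D`. The square of `H`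
preserves orientation, is still non-wandering on `D`, and has no fixed point as `f` has no periodic
point. This contradicts Brouwer's theorem that a ball disjoint from its image under a fixed point
free orientation-preserving homeomorphism of the plane is never revisited.

Brouwer's theorem is proved with continuous logarithms. An arc from a point to its image extends to
a line on which the homeomorphism `h` acts as a shift. If this line closed up, then along a shortest
loop in it the argument of `h z - z` would change by two half turns in the same direction, although
`h z - z` has a continuous logarithm on the whole plane.
-/

section Logarithms

variable {X Y : Type*} [TopologicalSpace X] [TopologicalSpace Y]

/-- `l` is a continuous branch of `log g` on `S`. -/
def IsLogOn (g l : X → ℂ) (S : Set X) : Prop :=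
  ContinuousOn l S ∧ ∀ x ∈ S, Complex.exp (l x) = g x

namespace IsLogOn

variable {g g₁ l l₁ l₂ : X → ℂ} {S S' : Set X}

theorem mono (hl : IsLogOn g l S) (hS : S' ⊆ S) : IsLogOn g l S' :=
  ⟨hl.1.mono hS, fun x hx => hl.2 x (hS hx)⟩

theorem comp (hl : IsLogOn g l S) {φ : Y → X} {R : Set Y} (hφ : ContinuousOn φ R)
    (hR : Set.MapsTo φ R S) : IsLogOn (g ∘ φ) (l ∘ φ) R :=
  ⟨hl.1.comp hφ hR, fun y hy => hl.2 (φ y) (hR hy)⟩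

theorem congr (hl : IsLogOn g l S) (hg : Set.EqOn g g₁ S) : IsLogOn g₁ l S :=
  ⟨hl.1, fun x hx => (hl.2 x hx).trans (hg hx)⟩

theorem add_const (hl : IsLogOn g l S) (c : ℂ) :
    IsLogOn (fun x => g x * Complex.exp c) (fun x => l x + c) S :=
  ⟨hl.1.add continuousOn_const, fun x hx => by rw [Complex.exp_add, hl.2 x hx]⟩

theorem add_pi_mul_I (hl : IsLogOn g l S) :
    IsLogOn (fun x => -g x) (fun x => l x + Real.pi * Complex.I) S :=
  (hl.add_const _).congr fun x _ => by simp only [Complex.exp_pi_mul_I, mul_neg_one]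

theorem eqOn_of_eq (h₁ : IsLogOn g l₁ S) (h₂ : IsLogOn g l₂ S) (hS : IsPreconnected S) {x : X}
    (hx : x ∈ S) (h : l₁ x = l₂ x) : Set.EqOn l₁ l₂ S :=
  Complex.isCoveringMap_exp.eqOn_of_comp_eqOn hS h₁.1 h₂.1
    (fun y hy => Subtype.ext ((h₁.2 y hy).trans (h₂.2 y hy).symm)) hx h

theorem sub_eq_sub (h₁ : IsLogOn g l₁ S) (h₂ : IsLogOn g l₂ S) (hS : IsPreconnected S) {x y : X}
    (hx : x ∈ S) (hy : y ∈ S) : l₁ x - l₂ x = l₁ y - l₂ y := by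
  have hconst : Complex.exp (l₁ x - l₂ x) = 1 := by
    rw [Complex.exp_sub, h₁.2 x hx, ← h₂.2 x hx, div_self (Complex.exp_ne_zero _)]
  have hshift : IsLogOn g (fun z => l₂ z + (l₁ x - l₂ x)) S :=
    (h₂.add_const _).congr fun z _ => by simp only [hconst, mul_one]
  linear_combination -h₁.eqOn_of_eq hshift hS hx (by ring) hy

end IsLogOn

theorem isLogOn_log {g : X → ℂ} {S : Set X} (hg : ContinuousOn g S)
    (hslit : ∀ x ∈ S, g x ∈ Complex.slitPlane) : IsLogOn g (fun x => Complex.log (g x)) S :=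
  ⟨hg.clog hslit, fun x hx => Complex.exp_log (Complex.slitPlane_ne_zero (hslit x hx))⟩

theorem exists_isLogOn_of_convex {E : Type*} [AddCommGroup E] [Module ℝ E] [TopologicalSpace E]
    [IsTopologicalAddGroup E] [ContinuousSMul ℝ E] {S : Set E} (hS : Convex ℝ S) {g : E → ℂ}
    (hg : ContinuousOn g S) (hg0 : ∀ x ∈ S, g x ≠ 0) {c : E} (hc : c ∈ S) {w : ℂ}
    (hw : Complex.exp w = g c) : ∃ l, IsLogOn g l S ∧ l c = w := by
  classical
  have hray (p : unitInterval × S) : c + (p.1 : ℝ) • ((p.2 : E) - c) ∈ S :=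
    hS.add_smul_sub_mem hc p.2.2 p.1.2
  let H : C(unitInterval × S, {z : ℂ // z ≠ 0}) :=
    ⟨fun p => ⟨g (c + (p.1 : ℝ) • ((p.2 : E) - c)), hg0 _ (hray p)⟩,
      (hg.comp_continuous (by fun_prop) hray).subtype_mk _⟩
  have hH0 (a : S) : H (0, a) = ⟨Complex.exp w, Complex.exp_ne_zero w⟩ :=
    Subtype.ext (by simp [H, hw])
  let K := Complex.isCoveringMap_exp.liftHomotopy H (ContinuousMap.const S w) hH0
  have hK (x : S) : Complex.exp (K (1, x)) = g x := by
    have hlift := Complex.isCoveringMap_exp.liftHomotopy_lifts H (ContinuousMap.const S w) hH0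
    simpa [H] using congrArg Subtype.val (congrFun hlift (1, x))
  let l : E → ℂ := fun x => if hx : x ∈ S then K (1, ⟨x, hx⟩) else 0
  have hl : S.domRestrict l = fun x => K (1, x) := funext fun x => dif_pos x.2
  have hlog : IsLogOn g l S := by
    refine ⟨?_, fun x hx => (congrArg Complex.exp (dif_pos hx)).trans (hK ⟨x, hx⟩)⟩
    rw [continuousOn_iff_continuous_domRestrict, hl]
    fun_prop
  have hexp : Complex.exp (w - l c) = 1 := by
    rw [Complex.exp_sub, hw, hlog.2 c hc, div_self (hg0 c hc)]
  exact ⟨fun x => l x + (w - l c),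
    (hlog.add_const _).congr fun x _ => by simp only [hexp, mul_one], by ring⟩

end Logarithms

section Degree

/-- The increment of `h` from `z` in logarithmic polar coordinates around `z`: the displacement
`exp t` is nonzero, so `increment h` has no zeros when `h` is injective. -/
def increment (h : ℂ → ℂ) (p : ℂ × ℂ) : ℂ := h (p.1 + Complex.exp p.2) - h p.1

/-- `l` is a logarithm of the increments of `h` which gains `2πid` along a small circle around
any point. -/
structure IsDegreeLog (h : ℂ → ℂ) (d : ℤ) (l : ℂ × ℂ → ℂ) : Prop where
  isLogOn : IsLogOn (increment h) l Set.univ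
  periodic (z t : ℂ) :
    l (z, t + 2 * Real.pi * Complex.I) = l (z, t) + d * (2 * Real.pi * Complex.I)

/-- The local degree of an injective continuous map `h : ℂ → ℂ` is `d`. As the plane is connected,
the degree does not depend on the point around which it is measured. -/
def HasDegree (h : ℂ → ℂ) (d : ℤ) : Prop := ∃ l, IsDegreeLog h d l

variable {h k : ℂ → ℂ} {d e : ℤ} {l : ℂ × ℂ → ℂ}

theorem exp_add_two_pi_mul_I (t : ℂ) :
    Complex.exp (t + 2 * Real.pi * Complex.I) = Complex.exp t := by
  rw [Complex.exp_add, Complex.exp_two_pi_mul_I, mul_one]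

namespace IsDegreeLog

theorem continuous (hl : IsDegreeLog h d l) : Continuous l := continuousOn_univ.1 hl.isLogOn.1

theorem exp_apply (hl : IsDegreeLog h d l) (z t : ℂ) :
    Complex.exp (l (z, t)) = h (z + Complex.exp t) - h z :=
  hl.isLogOn.2 (z, t) trivial

theorem apply_add_int_mul (hl : IsDegreeLog h d l) (z t : ℂ) (n : ℤ) :
    l (z, t + n * (2 * Real.pi * Complex.I)) = l (z, t) + n * d * (2 * Real.pi * Complex.I) := by
  induction n using Int.induction_on generalizing t with
  | zero => simp
  | succ i ih =>
    have hstep := hl.periodic z (t + i * (2 * Real.pi * Complex.I))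
    rw [add_assoc] at hstep
    push_cast at ih ⊢
    rw [add_one_mul, hstep, ih]
    ring
  | pred i ih =>
    have hstep := hl.periodic z (t + (-i - 1) * (2 * Real.pi * Complex.I))
    rw [add_assoc, show (-i - 1) * (2 * Real.pi * Complex.I) + 2 * Real.pi * Complex.I =
      -i * (2 * Real.pi * Complex.I) by ring] at hstep
    push_cast at ih ⊢
    linear_combination ih t - hstep

theorem add_const (hl : IsDegreeLog h d l) {c : ℂ} (hc : Complex.exp c = 1) :
    IsDegreeLog h d (fun p => l p + c) where
  isLogOn := (hl.isLogOn.add_const c).congr fun p _ => by simp only [hc, mul_one]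
  periodic z t := by rw [hl.periodic]; ring

theorem apply_add_exp_add_pi_mul_I (hl : IsDegreeLog h d l) (z t : ℂ) :
    l (z + Complex.exp t, t + Real.pi * Complex.I) = l (z, t) + d * (Real.pi * Complex.I) := by
  let φ : ℂ × ℂ → ℂ × ℂ := fun p => (p.1 + Complex.exp p.2, p.2 + Real.pi * Complex.I)
  have hexp (t : ℂ) : Complex.exp (t + Real.pi * Complex.I) = -Complex.exp t := by
    rw [Complex.exp_add, Complex.exp_pi_mul_I, mul_neg_one]
  have hrev : IsLogOn (fun p => -increment h p) (l ∘ φ) Set.univ :=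
    (hl.isLogOn.comp (by fun_prop) (Set.mapsTo_univ _ _)).congr fun p _ => by
      simp [increment, φ, hexp]
  -- Reversing a chord twice is a full turn, so reversing it once is half a full turn.
  have hconst := hrev.sub_eq_sub hl.isLogOn.add_pi_mul_I isPreconnected_univ
    (Set.mem_univ (z, t)) (Set.mem_univ (φ (z, t)))
  have hφφ : φ (φ (z, t)) = (z, t + 2 * Real.pi * Complex.I) := by
    ext <;> simp only [φ, hexp] <;> ring
  simp only [Function.comp_apply, hφφ, hl.periodic] at hconst
  linear_combination (1 / 2) * hconst

theorem apply_add_exp_add (hl : IsDegreeLog h d l) (z t : ℂ) {c : ℂ} (hc : Complex.exp c = -1) :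
    l (z + Complex.exp t, t + c) = l (z, t) + d * c := by
  obtain ⟨m, rfl⟩ : ∃ m : ℤ, c = Real.pi * Complex.I + m * (2 * Real.pi * Complex.I) :=
    Complex.exp_eq_exp_iff_exists_int.1 (hc.trans Complex.exp_pi_mul_I.symm)
  rw [← add_assoc, hl.apply_add_int_mul, hl.apply_add_exp_add_pi_mul_I]
  ring

theorem comp {m : ℂ × ℂ → ℂ} (hl : IsDegreeLog h d l) (hm : IsDegreeLog k e m)
    (hk : Continuous k) : IsDegreeLog (h ∘ k) (d * e) (fun p => l (k p.1, m p)) where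
  isLogOn := by
    have := hm.continuous
    refine (hl.isLogOn.comp (φ := fun p => (k p.1, m p)) (R := Set.univ) (by fun_prop)
      (Set.mapsTo_univ _ _)).congr fun p _ => ?_
    simp [increment, hm.exp_apply]
  periodic z t := by
    rw [hm.periodic, hl.apply_add_int_mul]
    push_cast
    ring

end IsDegreeLog

namespace HasDegree

theorem exists_log_eq (hh : HasDegree h d) (p : ℂ × ℂ) {w : ℂ}
    (hw : Complex.exp w = increment h p) : ∃ l, IsDegreeLog h d l ∧ l p = w := by
  obtain ⟨l, hl⟩ := hh
  have hexp : Complex.exp (w - l p) = 1 := by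
    rw [Complex.exp_sub, hw, ← hl.isLogOn.2 p trivial, div_self (Complex.exp_ne_zero _)]
  exact ⟨_, hl.add_const hexp, by ring⟩

theorem exists_log_apply_displacement (hh : HasDegree h d) (hcont : Continuous h) {Θ : ℂ → ℂ}
    (hΘ : IsLogOn (fun z => h z - z) Θ Set.univ) :
    ∃ l, IsDegreeLog h d l ∧ ∀ z, l (z, Θ z) = Θ (h z) := by
  have hincr (z : ℂ) : increment h (z, Θ z) = h (h z) - h z := by
    simp [increment, hΘ.2 z trivial]
  obtain ⟨l, hl, hl0⟩ := hh.exists_log_eq (0, Θ 0) (w := Θ (h 0))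
    ((hΘ.2 _ trivial).trans (hincr 0).symm)
  have hΘc : Continuous Θ := continuousOn_univ.1 hΘ.1
  have hleft : IsLogOn (fun z => h (h z) - h z) (fun z => l (z, Θ z)) Set.univ :=
    (hl.isLogOn.comp (φ := fun z => (z, Θ z)) (by fun_prop)
      (Set.mapsTo_univ _ _)).congr fun z _ => hincr z
  have hright : IsLogOn (fun z => h (h z) - h z) (fun z => Θ (h z)) Set.univ :=
    hΘ.comp hcont.continuousOn (Set.mapsTo_univ _ _)
  exact ⟨l, hl, fun z => hleft.eqOn_of_eq hright isPreconnected_univ trivial hl0 trivial⟩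

theorem comp (hh : HasDegree h d) (hk : HasDegree k e) (hcont : Continuous k) :
    HasDegree (h ∘ k) (d * e) := by
  obtain ⟨l, hl⟩ := hh
  obtain ⟨m, hm⟩ := hk
  exact ⟨_, hl.comp hm hcont⟩

theorem unique (hd : HasDegree h d) (he : HasDegree h e) : d = e := by
  obtain ⟨l, hl⟩ := hd
  obtain ⟨m, hm⟩ := he
  have hconst := hl.isLogOn.sub_eq_sub hm.isLogOn isPreconnected_univ
    (Set.mem_univ (0, 0 + 2 * Real.pi * Complex.I)) (Set.mem_univ (0, 0))
  rw [hl.periodic, hm.periodic] at hconst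
  have hmul : ((d : ℂ) - e) * (2 * Real.pi * Complex.I) = 0 := by linear_combination hconst
  have := (mul_eq_zero.1 hmul).resolve_right Complex.two_pi_I_ne_zero
  exact_mod_cast sub_eq_zero.1 this

end HasDegree

theorem hasDegree_id : HasDegree id 1 :=
  ⟨Prod.snd, ⟨continuousOn_snd, fun p _ => by simp [increment]⟩, fun z t => by simp⟩

theorem exists_hasDegree (hcont : Continuous h) (hinj : Function.Injective h) :
    ∃ d, HasDegree h d := by
  have hne (p : ℂ × ℂ) : increment h p ≠ 0 := fun h0 =>
    Complex.exp_ne_zero p.2 (by simpa using hinj (sub_eq_zero.1 h0))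
  have hincr : Continuous (increment h) := by unfold increment; fun_prop
  obtain ⟨l, hl, -⟩ := exists_isLogOn_of_convex convex_univ hincr.continuousOn
    (fun p _ => hne p) (Set.mem_univ 0) (Complex.exp_log (hne 0))
  let τ : ℂ × ℂ → ℂ × ℂ := fun p => (p.1, p.2 + 2 * Real.pi * Complex.I)
  have hτ : IsLogOn (increment h) (l ∘ τ) Set.univ :=
    (hl.comp (by fun_prop) (Set.mapsTo_univ _ _)).congr fun p _ => by
      simp only [Function.comp_apply, increment, τ, exp_add_two_pi_mul_I]
  obtain ⟨d, hd⟩ : ∃ d : ℤ, l (τ 0) = l 0 + d * (2 * Real.pi * Complex.I) :=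
    Complex.exp_eq_exp_iff_exists_int.1 ((hτ.2 0 trivial).trans (hl.2 0 trivial).symm)
  refine ⟨d, l, hl, fun z t => ?_⟩
  have hconst := hτ.sub_eq_sub hl isPreconnected_univ (Set.mem_univ (z, t)) (Set.mem_univ 0)
  simp only [Function.comp_apply, hd] at hconst
  linear_combination hconst

theorem hasDegree_mul_symm (h : ℂ ≃ₜ ℂ) (hd : HasDegree h d) (he : HasDegree h.symm e) :
    d * e = 1 := by
  have hcomp := hd.comp he h.symm.continuous
  rw [h.self_comp_symm] at hcomp
  exact hcomp.unique hasDegree_id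

theorem hasDegree_comp_self (h : ℂ ≃ₜ ℂ) : HasDegree (h ∘ h) 1 := by
  obtain ⟨d, hd⟩ := exists_hasDegree h.continuous h.injective
  obtain ⟨e, he⟩ := exists_hasDegree h.symm.continuous h.symm.injective
  have hdd : d * d = 1 := by
    rcases Int.eq_one_or_neg_one_of_mul_eq_one (hasDegree_mul_symm h hd he) with rfl | rfl <;> rfl
  exact hdd ▸ hd.comp hd h.continuous

theorem hasDegree_one_symm (h : ℂ ≃ₜ ℂ) (hh : HasDegree h 1) : HasDegree h.symm 1 := by
  obtain ⟨e, he⟩ := exists_hasDegree h.symm.continuous h.symm.injective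
  have he1 : e = 1 := by simpa using hasDegree_mul_symm h hh he
  exact he1 ▸ he

theorem hasDegree_one_of_norm_sub_sub_lt (hcont : Continuous h)
    (hlt : ∀ x y, x ≠ y → ‖h x - h y - (x - y)‖ < ‖x - y‖) : HasDegree h 1 := by
  let δ : ℂ × ℂ → ℂ := fun p => increment h p / Complex.exp p.2
  have hδ (p : ℂ × ℂ) : δ p ∈ Complex.slitPlane := by
    refine Complex.ball_one_subset_slitPlane ?_
    have hp := hlt (p.1 + Complex.exp p.2) p.1 (by simp [Complex.exp_ne_zero])
    rw [add_sub_cancel_left] at hp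
    rwa [mem_ball_iff_norm, div_sub_one (Complex.exp_ne_zero _), norm_div,
      div_lt_one (norm_pos_iff.2 (Complex.exp_ne_zero _))]
  have hδc : Continuous δ :=
    Continuous.div (by unfold increment; fun_prop) (by fun_prop) fun p => Complex.exp_ne_zero _
  refine ⟨fun p => Complex.log (δ p) + p.2, ⟨?_, fun p _ => ?_⟩, fun z t => ?_⟩
  · exact ((hδc.clog hδ).add continuous_snd).continuousOn
  · rw [Complex.exp_add, Complex.exp_log (Complex.slitPlane_ne_zero (hδ p)),
      div_mul_cancel₀ _ (Complex.exp_ne_zero _)]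
  · simp only [δ, increment, exp_add_two_pi_mul_I]
    push_cast
    ring

end Degree

section TranslationLine

/-- A translation line of `h`: a curve on which `h` acts as the unit shift of the parameter and
whose arcs of parameter length one are simple. -/
structure IsTranslationLine {X : Type*} [TopologicalSpace X] (h : X → X) (J : ℝ → X) : Prop where
  continuous : Continuous J
  apply_add_one (t : ℝ) : J (t + 1) = h (J t)
  apply_ne {s t : ℝ} (hlt : s < t) (hle : t ≤ s + 1) : J s ≠ J t

/-- The pairs of parameters in `A` whose difference lies in `I`. -/
def chordDomain (A I : Set ℝ) : Set (ℝ × ℝ) := {p | p.1 ∈ A ∧ p.2 ∈ A ∧ p.2 - p.1 ∈ I}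

/-- The chord of the plane curve `J` between two parameters. -/
def chord (J : ℝ → ℂ) (p : ℝ × ℝ) : ℂ := J p.2 - J p.1

theorem convex_chordDomain {A I : Set ℝ} (hA : Convex ℝ A) (hI : Convex ℝ I) :
    Convex ℝ (chordDomain A I) :=
  (hA.linear_preimage (LinearMap.fst ℝ ℝ ℝ)).inter <|
    (hA.linear_preimage (LinearMap.snd ℝ ℝ ℝ)).inter <|
      hI.linear_preimage (LinearMap.snd ℝ ℝ ℝ - LinearMap.fst ℝ ℝ ℝ)

theorem exists_isLogOn_chord {J : ℝ → ℂ} (hJ : Continuous J) {A I : Set ℝ} (hA : Convex ℝ A)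
    (hI : Convex ℝ I) (hne : ∀ p ∈ chordDomain A I, J p.1 ≠ J p.2) {p : ℝ × ℝ}
    (hp : p ∈ chordDomain A I) {w : ℂ} (hw : Complex.exp w = chord J p) :
    ∃ Φ, IsLogOn (chord J) Φ (chordDomain A I) ∧ Φ p = w :=
  exists_isLogOn_of_convex (g := chord J) (convex_chordDomain hA hI)
    (by unfold chord; fun_prop) (fun q hq => sub_ne_zero.2 (hne q hq).symm) hp hw

/-- As `J s = J T`, the chord from `r` to `T` is the reversal of the chord from `s` to `r`. -/
theorem exists_chord_log_eq_add {J : ℝ → ℂ} {s T : ℝ} (hsT : s < T) (hloop : J s = J T)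
    {Φ : ℝ × ℝ → ℂ} (hΦ : IsLogOn (chord J) Φ (chordDomain (Set.Icc s T) (Set.Ioo 0 (T - s)))) :
    ∃ c, Complex.exp c = -1 ∧ ∀ r ∈ Set.Ioo s T, Φ (r, T) = Φ (s, r) + c := by
  have hstart : Set.MapsTo (fun r => (s, r)) (Set.Ioo s T)
      (chordDomain (Set.Icc s T) (Set.Ioo 0 (T - s))) := fun r hr =>
    ⟨⟨le_rfl, hsT.le⟩, ⟨hr.1.le, hr.2.le⟩, sub_pos.2 hr.1, sub_lt_sub_right hr.2 s⟩
  have hend : Set.MapsTo (fun r => (r, T)) (Set.Ioo s T)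
      (chordDomain (Set.Icc s T) (Set.Ioo 0 (T - s))) := fun r hr =>
    ⟨⟨hr.1.le, hr.2.le⟩, ⟨hsT.le, le_rfl⟩, sub_pos.2 hr.2, sub_lt_sub_left hr.1 T⟩
  have hrev : IsLogOn (fun r => -chord J (s, r)) (fun r => Φ (r, T)) (Set.Ioo s T) :=
    (hΦ.comp (by fun_prop) hend).congr fun r _ => by simp [chord, hloop]
  have hfwd := (hΦ.comp (by fun_prop) hstart).add_pi_mul_I
  obtain ⟨m, hm⟩ := Set.nonempty_Ioo.2 hsT
  refine ⟨Φ (m, T) - Φ (s, m), ?_, fun r hr => ?_⟩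
  · have hne : chord J (s, m) ≠ 0 := hΦ.2 _ (hstart hm) ▸ Complex.exp_ne_zero _
    rw [Complex.exp_sub, hrev.2 m hm, hΦ.2 _ (hstart hm), neg_div_self hne]
  · have hconst := hrev.sub_eq_sub hfwd isPreconnected_Ioo hr hm
    simp only [Function.comp_apply] at hconst
    linear_combination hconst

namespace IsTranslationLine

variable {h : ℂ → ℂ} {J : ℝ → ℂ} {d : ℤ} {l : ℂ × ℂ → ℂ} {Θ : ℂ → ℂ} {Φ Ψ : ℝ × ℝ → ℂ} {s T : ℝ}

theorem log_apply_chord_eq (hJ : IsTranslationLine h J) (hl : IsDegreeLog h d l)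
    {Q S : Set (ℝ × ℝ)} (hΦ : IsLogOn (chord J) Φ S) (hQ : IsPreconnected Q) (hQS : Q ⊆ S)
    (hshift : ∀ p ∈ Q, (p.1 + 1, p.2 + 1) ∈ S) {p q : ℝ × ℝ} (hp : p ∈ Q)
    (hlp : l (J p.1, Φ p) = Φ (p.1 + 1, p.2 + 1)) (hq : q ∈ Q) :
    l (J q.1, Φ q) = Φ (q.1 + 1, q.2 + 1) := by
  have hJc := hJ.continuous
  have hleft : IsLogOn (fun p => chord J (p.1 + 1, p.2 + 1)) (fun p => l (J p.1, Φ p)) Q :=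
    (hl.isLogOn.comp (φ := fun p : ℝ × ℝ => (J p.1, Φ p))
      ((hJc.comp continuous_fst).continuousOn.prodMk (hΦ.1.mono hQS))
      (Set.mapsTo_univ _ _)).congr fun p hp => by
        simp [increment, chord, hΦ.2 p (hQS hp), hJ.apply_add_one]
  exact hleft.eqOn_of_eq (hΦ.comp (by fun_prop) hshift) hQ hp hlp hq

theorem exists_log_short_chord (hJ : IsTranslationLine h J) (hl : IsDegreeLog h d l)
    (hΘ : IsLogOn (fun z => h z - z) Θ Set.univ) (hlΘ : ∀ z, l (z, Θ z) = Θ (h z)) :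
    ∃ Ψ, IsLogOn (chord J) Ψ (chordDomain Set.univ (Set.Ioc 0 1)) ∧
      (∀ t, Ψ (t, t + 1) = Θ (J t)) ∧
      ∀ p ∈ chordDomain Set.univ (Set.Ioc 0 1), l (J p.1, Ψ p) = Ψ (p.1 + 1, p.2 + 1) := by
  have hunit (t : ℝ) : (t, t + 1) ∈ chordDomain Set.univ (Set.Ioc 0 1) :=
    ⟨trivial, trivial, by simp⟩
  have hexp (t : ℝ) : Complex.exp (Θ (J t)) = chord J (t, t + 1) :=
    (hΘ.2 _ trivial).trans (by simp only [chord, hJ.apply_add_one])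
  obtain ⟨Ψ, hΨ, hΨ0⟩ := exists_isLogOn_chord hJ.continuous convex_univ (convex_Ioc 0 1)
    (fun p hp => hJ.apply_ne (sub_pos.1 hp.2.2.1) (sub_le_iff_le_add'.1 hp.2.2.2))
    (hunit 0) (hexp 0)
  have hdiag (t : ℝ) : Ψ (t, t + 1) = Θ (J t) :=
    (hΨ.comp (φ := fun t => (t, t + 1)) (by fun_prop) fun t _ => hunit t).eqOn_of_eq
      ((hΘ.comp hJ.continuous.continuousOn (Set.mapsTo_univ _ _)).congr fun t _ => by
        simp [chord, hJ.apply_add_one])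
      isPreconnected_univ (Set.mem_univ 0) hΨ0 (Set.mem_univ t)
  refine ⟨Ψ, hΨ, hdiag, fun p hp => hJ.log_apply_chord_eq hl hΨ
    (convex_chordDomain convex_univ (convex_Ioc 0 1)).isPreconnected subset_rfl
    (fun q hq => ⟨trivial, trivial, by simpa using hq.2.2⟩) (hunit 0) ?_ hp⟩
  have hstep := hdiag 1
  rw [← zero_add (1 : ℝ), hJ.apply_add_one, ← hlΘ, ← hdiag 0] at hstep
  simpa using hstep.symm

theorem exists_log_chord_eqOn (hJ : Continuous J) (hsT : s + 1 < T)
    (hsimple : ∀ p ∈ chordDomain (Set.Icc s T) (Set.Ioo 0 (T - s)), J p.1 ≠ J p.2)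
    (hΨ : IsLogOn (chord J) Ψ (chordDomain Set.univ (Set.Ioc 0 1))) :
    ∃ Φ, IsLogOn (chord J) Φ (chordDomain (Set.Icc s T) (Set.Ioo 0 (T - s))) ∧
      Set.EqOn Φ Ψ (chordDomain (Set.Icc s T) (Set.Ioc 0 1)) := by
  have hmem : (s, s + 1) ∈ chordDomain (Set.Icc s T) (Set.Ioc 0 1) :=
    ⟨⟨le_rfl, by linarith⟩, ⟨by linarith, hsT.le⟩, by simp⟩
  have hsub : chordDomain (Set.Icc s T) (Set.Ioc 0 1) ⊆ chordDomain Set.univ (Set.Ioc 0 1) :=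
    fun p hp => ⟨trivial, trivial, hp.2.2⟩
  have hsub' : chordDomain (Set.Icc s T) (Set.Ioc 0 1) ⊆
      chordDomain (Set.Icc s T) (Set.Ioo 0 (T - s)) := fun p hp =>
    ⟨hp.1, hp.2.1, hp.2.2.1, hp.2.2.2.trans_lt (by linarith)⟩
  obtain ⟨Φ, hΦ, hΦs⟩ := exists_isLogOn_chord hJ (convex_Icc s T) (convex_Ioo 0 (T - s)) hsimple
    (hsub' hmem) (hΨ.2 _ (hsub hmem))
  exact ⟨Φ, hΦ, (hΦ.mono hsub').eqOn_of_eq (hΨ.mono hsub)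
    (convex_chordDomain (convex_Icc s T) (convex_Ioc 0 1)).isPreconnected hmem hΦs⟩

theorem log_apply_longest_chord (hJ : IsTranslationLine h J) (hl : IsDegreeLog h d l)
    (hsT : s + 1 < T) (hΦ : IsLogOn (chord J) Φ (chordDomain (Set.Icc s T) (Set.Ioo 0 (T - s))))
    (hΦΨ : Set.EqOn Φ Ψ (chordDomain (Set.Icc s T) (Set.Ioc 0 1)))
    (hΨ : ∀ p ∈ chordDomain Set.univ (Set.Ioc 0 1), l (J p.1, Ψ p) = Ψ (p.1 + 1, p.2 + 1)) :
    l (J s, Φ (s, T - 1)) = Φ (s + 1, T) := by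
  obtain ⟨m, hsm, hm1, hmT⟩ : ∃ m, s < m ∧ m ≤ s + 1 ∧ m ≤ T - 1 :=
    ⟨min (s + 1) (T - 1), by grind, min_le_left _ _, min_le_right _ _⟩
  have hbase : l (J s, Φ (s, m)) = Φ (s + 1, m + 1) := by
    rw [hΦΨ (x := (s, m)) ⟨⟨le_rfl, by linarith⟩, ⟨hsm.le, by linarith⟩, by grind⟩,
      hΦΨ (x := (s + 1, m + 1)) ⟨⟨by linarith, hsT.le⟩, ⟨by linarith, by linarith⟩, by grind⟩]
    exact hΨ (s, m) ⟨trivial, trivial, by grind⟩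
  have hshift := hJ.log_apply_chord_eq hl hΦ (p := (s, m)) (q := (s, T - 1))
    (convex_chordDomain (convex_Icc s (T - 1)) (convex_Ioi 0)).isPreconnected
    (fun p ⟨⟨hs₁, hT₁⟩, ⟨hs₂, hT₂⟩, hlt⟩ => ⟨⟨hs₁, by linarith⟩, ⟨hs₂, by linarith⟩, by grind⟩)
    (fun p ⟨⟨hs₁, hT₁⟩, ⟨hs₂, hT₂⟩, hlt⟩ =>
      ⟨⟨by linarith, by linarith⟩, ⟨by linarith, by linarith⟩, by grind⟩)
    ⟨⟨le_rfl, by linarith⟩, ⟨hsm.le, hmT⟩, sub_pos.2 hsm⟩ hbase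
    ⟨⟨le_rfl, by linarith⟩, ⟨by linarith, le_rfl⟩, by grind⟩
  simpa using hshift

/-- If the line closed up to a simple loop, the displacement of `h` would turn by two half turns
while running once around the loop. -/
theorem not_simple_loop (hJ : IsTranslationLine h J) (hcont : Continuous h)
    (hdeg : HasDegree h 1) (hfix : ∀ z, h z ≠ z) (hsT : s + 1 < T)
    (hsimple : ∀ p ∈ chordDomain (Set.Icc s T) (Set.Ioo 0 (T - s)), J p.1 ≠ J p.2) :
    J s ≠ J T := by
  intro hloop
  obtain ⟨Θ, hΘ, -⟩ := exists_isLogOn_of_convex convex_univ (g := fun z => h z - z)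
    (by fun_prop) (fun z _ => sub_ne_zero.2 (hfix z)) (Set.mem_univ 0)
    (Complex.exp_log (sub_ne_zero.2 (hfix 0)))
  obtain ⟨l, hl, hlΘ⟩ := hdeg.exists_log_apply_displacement hcont hΘ
  obtain ⟨Ψ, hΨ, hΨΘ, hΨl⟩ := hJ.exists_log_short_chord hl hΘ hlΘ
  obtain ⟨Φ, hΦ, hΦΨ⟩ := exists_log_chord_eqOn hJ.continuous hsT hsimple hΨ
  obtain ⟨c, hc, hΦc⟩ := exists_chord_log_eq_add (by linarith) hloop hΦ
  have hΦΘ {t : ℝ} (hst : s ≤ t) (htT : t + 1 ≤ T) : Φ (t, t + 1) = Θ (J t) := by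
    rw [hΦΨ ⟨⟨hst, by linarith⟩, ⟨by linarith, htT⟩, by simp⟩, hΨΘ]
  have hchord : J s + Complex.exp (Φ (s, T - 1)) = J (T - 1) := by
    rw [hΦ.2 _ ⟨⟨le_rfl, by linarith⟩, ⟨by linarith, by linarith⟩, by constructor <;> linarith⟩]
    exact add_sub_cancel _ _
  have hturn : Θ (J T) = Θ (J s) + 2 * c := calc
    Θ (J T) = l (J (T - 1), Θ (J (T - 1))) := by rw [hlΘ, ← hJ.apply_add_one, sub_add_cancel]
    _ = l (J (T - 1), Φ (s, T - 1) + c) := by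
      rw [← hΦΘ (by linarith) (by linarith), sub_add_cancel,
        hΦc _ ⟨by linarith, by linarith⟩]
    _ = l (J s, Φ (s, T - 1)) + c := by
      rw [← hchord, hl.apply_add_exp_add _ _ hc, Int.cast_one, one_mul]
    _ = Φ (s + 1, T) + c := by rw [hJ.log_apply_longest_chord hl hsT hΦ hΦΨ hΨl]
    _ = Θ (J s) + 2 * c := by
      rw [hΦc _ ⟨by linarith, hsT⟩, hΦΘ le_rfl hsT.le]; ring
  have hc0 : c = 0 := by
    rw [hloop] at hturn
    linear_combination -hturn / 2
  norm_num [hc0] at hc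

theorem injective (hJ : IsTranslationLine h J) (hcont : Continuous h) (hdeg : HasDegree h 1)
    (hfix : ∀ z, h z ≠ z) : Function.Injective J := by
  refine .of_lt_imp_ne fun a b hab hJab => ?_
  have hgap {t t' : ℝ} (hlt : t < t') (heq : J t = J t') : t + 1 < t' :=
    not_le.1 fun hle => hJ.apply_ne hlt hle heq
  let loops : Set (ℝ × ℝ) := Set.Icc a b ×ˢ Set.Icc a b ∩ {p | p.1 + 1 ≤ p.2 ∧ J p.1 = J p.2}
  have hloops : IsCompact loops := by
    have hJc := hJ.continuous
    refine (isCompact_Icc.prod isCompact_Icc).inter_right (IsClosed.inter ?_ ?_)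
    · exact isClosed_le (continuous_fst.add continuous_const) continuous_snd
    · exact isClosed_eq (hJc.comp continuous_fst) (hJc.comp continuous_snd)
  have hab' : (a, b) ∈ loops :=
    ⟨⟨⟨le_rfl, hab.le⟩, hab.le, le_rfl⟩, (hgap hab hJab).le, hJab⟩
  obtain ⟨⟨s, T⟩, ⟨⟨hs, hT⟩, hsT, hJsT⟩, hshortest⟩ :=
    hloops.exists_isMinOn ⟨_, hab'⟩ (f := fun p => p.2 - p.1) (by fun_prop)
  refine hJ.not_simple_loop hcont hdeg hfix (hgap (by grind) hJsT) (fun p hp heq => ?_) hJsT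
  have hp' : p ∈ loops := ⟨⟨⟨hs.1.trans hp.1.1, hp.1.2.trans hT.2⟩, hs.1.trans hp.2.1.1,
    hp.2.1.2.trans hT.2⟩, (hgap (sub_pos.1 hp.2.2.1) heq).le, heq⟩
  exact not_lt.2 (hshortest hp') hp.2.2.2

end IsTranslationLine

end TranslationLine

section TranslationArc

/-- A translation arc of `h`: a simple arc from a point to its image which meets its own image
only there. -/
structure IsTranslationArc {X : Type*} [TopologicalSpace X] (h : X → X) (α : ℝ → X) : Prop where
  continuous : Continuous α
  apply_one : α 1 = h (α 0)
  injOn : Set.InjOn α (Set.Ico 0 1)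
  apply_ne {s t : ℝ} (hs : s ∈ Set.Ico 0 1) (ht : t ∈ Set.Ico 0 1) : α s ≠ h (α t)

section Extension

variable {X : Type*} [TopologicalSpace X] (h : X ≃ₜ X) {α : ℝ → X}

/-- The curve formed by the successive images of an arc under `h`. -/
def iteratedArc (α : ℝ → X) (t : ℝ) : X := (h ^ ⌊t⌋) (α (Int.fract t))

theorem iteratedArc_add_intCast (t : ℝ) (n : ℤ) :
    iteratedArc h α (t + n) = (h ^ n) (iteratedArc h α t) := by
  rw [iteratedArc, Int.floor_add_intCast, Int.fract_add_intCast, add_comm, zpow_add]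
  rfl

theorem iteratedArc_add_one (t : ℝ) : iteratedArc h α (t + 1) = h (iteratedArc h α t) := by
  simpa using iteratedArc_add_intCast h t 1

theorem iteratedArc_of_mem_Ico {t : ℝ} (ht : t ∈ Set.Ico 0 1) : iteratedArc h α t = α t := by
  rw [iteratedArc, Int.fract_eq_self.2 ht, Int.floor_eq_zero_iff.2 ht]
  rfl

theorem iteratedArc_eqOn_Icc (hα : α 1 = h (α 0)) (n : ℤ) :
    Set.EqOn (iteratedArc h α) (fun t => (h ^ n) (α (t - n))) (Set.Icc n (n + 1)) := by
  intro t ⟨hnt, htn⟩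
  have hstart : iteratedArc h α t = (h ^ n) (iteratedArc h α (t - n)) := by
    rw [← iteratedArc_add_intCast, sub_add_cancel]
  rw [hstart]
  rcases htn.lt_or_eq with htn | rfl
  · rw [iteratedArc_of_mem_Ico h ⟨sub_nonneg.2 hnt, by linarith⟩]
  · dsimp only
    rw [add_sub_cancel_left, hα, ← iteratedArc_of_mem_Ico h (α := α) (t := 0) (by simp),
      ← iteratedArc_add_one, zero_add]

theorem continuous_iteratedArc (hα : Continuous α) (h1 : α 1 = h (α 0)) :
    Continuous (iteratedArc h α) := by
  have hfinite : LocallyFinite fun n : ℤ => Set.Icc (n : ℝ) (n + 1) :=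
    locallyFinite_Icc_of_tendsto tendsto_intCast_atTop_atTop
      (tendsto_atBot_add_const_right _ _ (tendsto_intCast_atBot_iff.2 tendsto_id))
  exact hfinite.continuous (iUnion_Icc_intCast ℝ) (fun _ => isClosed_Icc) fun n =>
    ContinuousOn.congr (by fun_prop) (iteratedArc_eqOn_Icc h h1 n)

theorem IsTranslationArc.isTranslationLine (hα : IsTranslationArc h α) :
    IsTranslationLine h (iteratedArc h α) where
  continuous := continuous_iteratedArc h hα.continuous hα.apply_one
  apply_add_one := iteratedArc_add_one h
  apply_ne {t t'} hlt hle heq := by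
    obtain ⟨s, hs, hts⟩ : ∃ s ∈ Set.Ico (0 : ℝ) 1, t = s + ⌊t⌋ :=
      ⟨Int.fract t, ⟨Int.fract_nonneg t, Int.fract_lt_one t⟩, (Int.fract_add_floor t).symm⟩
    obtain ⟨s', hts_eq⟩ : ∃ s', t' = s' + ⌊t⌋ := ⟨t' - ⌊t⌋, (sub_add_cancel _ _).symm⟩
    rw [hts, hts_eq, iteratedArc_add_intCast, iteratedArc_add_intCast] at heq
    replace heq := (h ^ ⌊t⌋).injective heq
    rw [iteratedArc_of_mem_Ico h hs] at heq
    rcases lt_or_ge s' 1 with hs' | hs'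
    · have hs'_mem : s' ∈ Set.Ico 0 1 := ⟨by linarith [hs.1], hs'⟩
      rw [iteratedArc_of_mem_Ico h hs'_mem] at heq
      linarith [hα.injOn hs hs'_mem heq]
    · have hs'_mem : s' - 1 ∈ Set.Ico 0 1 := ⟨by linarith, by linarith [hs.2]⟩
      rw [← sub_add_cancel s' 1, iteratedArc_add_one, iteratedArc_of_mem_Ico h hs'_mem] at heq
      exact hα.apply_ne hs hs'_mem heq

end Extension

section Existence

variable {E : Type*} [NormedAddCommGroup E] [NormedSpace ℝ E]

/-- At radius `r` a closed ball growing around `x` meets its own image for the first time. -/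
theorem exists_radius_meeting_image [ProperSpace E] (h : E ≃ₜ E) (hfix : ∀ z, h z ≠ z) (x : E) :
    ∃ r > 0, (∃ w ∈ Metric.sphere x r, h w ∈ Metric.sphere x r) ∧
      ∀ v ∈ Metric.closedBall x r, h v ∈ Metric.closedBall x r →
        v ∈ Metric.sphere x r ∧ h v ∈ Metric.sphere x r := by
  obtain ⟨w, hw⟩ : ∃ w, ∀ v, max (dist w x) (dist (h w) x) ≤ max (dist v x) (dist (h v) x) :=
    Continuous.exists_forall_le (by fun_prop) <|
      tendsto_atTop_mono (fun v => le_max_left _ _) (tendsto_dist_right_cocompact_atTop x)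
  set r := max (dist w x) (dist (h w) x)
  have hr0 : 0 < r := by
    by_contra! hr0
    have hwx : w = x := dist_le_zero.1 ((le_max_left _ _).trans hr0)
    have hhwx : h w = x := dist_le_zero.1 ((le_max_right _ _).trans hr0)
    exact hfix w (hhwx.trans hwx.symm)
  have hdisj : Disjoint (Metric.ball x r) (h ⁻¹' Metric.ball x r) :=
    Set.disjoint_left.2 fun v hv hhv => (hw v).not_gt (max_lt hv hhv)
  have hleft := hdisj.closure_left (Metric.isOpen_ball.preimage h.continuous)
  have hright := hdisj.closure_right Metric.isOpen_ball
  rw [← h.preimage_closure] at hright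
  rw [closure_ball x hr0.ne'] at hleft hright
  have hsphere (v : E) (hv : v ∈ Metric.closedBall x r) (hhv : h v ∈ Metric.closedBall x r) :
      v ∈ Metric.sphere x r ∧ h v ∈ Metric.sphere x r :=
    ⟨hv.antisymm (not_lt.1 fun hlt => Set.disjoint_left.1 hright hlt hhv),
      hhv.antisymm (not_lt.1 fun hlt => Set.disjoint_left.1 hleft hv hlt)⟩
  exact ⟨r, hr0, ⟨w, hsphere w (le_max_left _ (dist (h w) x)) (le_max_right (dist w x) _)⟩, hsphere⟩

/-- The path which runs along the segments from `w` to `x` and from `x` to `w'`. -/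
def brokenSegment (w x w' : E) (t : ℝ) : E :=
  x + max (1 - 2 * t) 0 • (w - x) + max (2 * t - 1) 0 • (w' - x)

variable {w x w' : E} {r t : ℝ}

theorem continuous_brokenSegment : Continuous (brokenSegment w x w') := by
  unfold brokenSegment
  fun_prop

theorem brokenSegment_of_le (ht : t ≤ 1 / 2) :
    brokenSegment w x w' t = x + (1 - 2 * t) • (w - x) := by
  rw [brokenSegment, max_eq_left (by linarith), max_eq_right (by linarith), zero_smul, add_zero]

theorem brokenSegment_of_ge (ht : 1 / 2 ≤ t) :
    brokenSegment w x w' t = x + (2 * t - 1) • (w' - x) := by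
  rw [brokenSegment, max_eq_right (by linarith), max_eq_left (by linarith), zero_smul, add_zero]

theorem dist_brokenSegment (hw : w ∈ Metric.sphere x r) (hw' : w' ∈ Metric.sphere x r) :
    dist (brokenSegment w x w' t) x = |1 - 2 * t| * r := by
  rw [mem_sphere_iff_norm] at hw hw'
  rcases le_total t (1 / 2) with ht | ht
  · rw [brokenSegment_of_le ht, dist_self_add_left, norm_smul, hw, Real.norm_eq_abs]
  · rw [brokenSegment_of_ge ht, dist_self_add_left, norm_smul, hw', Real.norm_eq_abs, abs_sub_comm]

theorem injective_brokenSegment (hr : 0 < r) (hw : w ∈ Metric.sphere x r)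
    (hw' : w' ∈ Metric.sphere x r) (hne : w ≠ w') :
    Function.Injective (brokenSegment w x w') := by
  refine .of_lt_imp_ne fun s t hst heq => hne ?_
  have hnorm : |1 - 2 * s| = |1 - 2 * t| := by
    refine mul_right_cancel₀ hr.ne' ?_
    rw [← dist_brokenSegment hw hw', ← dist_brokenSegment hw hw', heq]
  obtain rfl : t = 1 - s := by rcases abs_eq_abs.1 hnorm with h | h <;> linarith
  rw [brokenSegment_of_le (by linarith), brokenSegment_of_ge (by linarith),
    show 2 * (1 - s) - 1 = 1 - 2 * s by ring] at heq
  exact sub_left_injective (smul_right_injective E (by linarith) (add_left_cancel heq))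

theorem exists_isTranslationArc [ProperSpace E] (h : E ≃ₜ E) (hfix : ∀ z, h z ≠ z) (x : E) :
    ∃ α, IsTranslationArc h α ∧ α (1 / 2) = x := by
  obtain ⟨r, hr, ⟨w, hw, hhw⟩, hsphere⟩ := exists_radius_meeting_image h hfix x
  let α := brokenSegment w x (h w)
  have hα0 : α 0 = w := (brokenSegment_of_le (by norm_num)).trans (by simp)
  have hball {t : ℝ} (ht : t ∈ Set.Ico 0 1) : α t ∈ Metric.closedBall x r := by
    rw [Metric.mem_closedBall, dist_brokenSegment hw hhw]
    exact mul_le_of_le_one_left hr.le (abs_le.2 ⟨by linarith [ht.2], by linarith [ht.1]⟩)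
  have heq0 {t : ℝ} (ht : t ∈ Set.Ico 0 1) (hαt : α t ∈ Metric.sphere x r) : t = 0 := by
    rw [Metric.mem_sphere, dist_brokenSegment hw hhw, mul_eq_right₀ hr.ne'] at hαt
    rcases eq_or_eq_neg_of_abs_eq hαt with h | h <;> linarith [ht.2]
  refine ⟨α, ⟨continuous_brokenSegment, ?_, ?_, fun {s t} hs ht heq => ?_⟩, ?_⟩
  · rw [hα0]
    exact (brokenSegment_of_ge (by norm_num)).trans (by norm_num)
  · exact (injective_brokenSegment hr hw hhw (hfix w).symm).injOn
  · obtain ⟨hαt, hhαt⟩ := hsphere (α t) (hball ht) (heq ▸ hball hs)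
    rw [heq0 hs (heq ▸ hhαt), heq0 ht hαt] at heq
    exact hfix _ heq.symm
  · exact (brokenSegment_of_le le_rfl).trans (by norm_num)

end Existence

/-- Brouwer's lemma on periodic points: a periodic point would close up a translation line. -/
theorem iterate_ne_self_of_hasDegree_one (h : ℂ ≃ₜ ℂ) (hdeg : HasDegree h 1)
    (hfix : ∀ z, h z ≠ z) {n : ℕ} (hn : n ≠ 0) (x : ℂ) : h^[n] x ≠ x := by
  intro hx
  obtain ⟨α, hα, hαx⟩ := exists_isTranslationArc h hfix x
  have hJ := hα.isTranslationLine h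
  have hJx : iteratedArc h α (1 / 2) = x :=
    (iteratedArc_of_mem_Ico h ⟨by norm_num, by norm_num⟩).trans hαx
  have hsemi : Function.Semiconj (iteratedArc h α) (· + 1) h := hJ.apply_add_one
  have hreturn : iteratedArc h α (1 / 2 + n) = iteratedArc h α (1 / 2) := by
    rw [hJx, ← hx, ← hJx, ← hsemi.iterate_right n (1 / 2)]
    simp
  simpa [hn] using hJ.injective h.continuous hdeg hfix hreturn

end TranslationArc

section FreeBall

section Push

variable {E : Type*} [NormedAddCommGroup E]

/-- The cone of height one over the ball of radius `R` around `c`. -/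
def coneBump (c : E) (R : ℝ) (z : E) : ℝ := max (1 - ‖z - c‖ / R) 0

theorem abs_coneBump_sub_le {R : ℝ} (hR : 0 < R) (c x y : E) :
    |coneBump c R x - coneBump c R y| ≤ ‖x - y‖ / R := calc
  _ ≤ |1 - ‖x - c‖ / R - (1 - ‖y - c‖ / R)| := abs_max_sub_max_le_abs _ _ _
  _ = |‖x - c‖ - ‖y - c‖| / R := by
    rw [sub_sub_sub_cancel_left, ← sub_div, abs_div, abs_of_pos hR, abs_sub_comm]
  _ ≤ ‖x - y‖ / R := by
    gcongr
    simpa using abs_norm_sub_norm_le (x - c) (y - c)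

variable [NormedSpace ℝ E] [CompleteSpace E]

theorem exists_homeomorph_of_norm_sub_sub_le {F : E → E} {K : NNReal} (hK : K < 1)
    (hF : ∀ x y, ‖F x - F y - (x - y)‖ ≤ K * ‖x - y‖) : ∃ φ : E ≃ₜ E, ⇑φ = F := by
  have happrox : ApproximatesLinearOn F
      ((ContinuousLinearEquiv.refl ℝ E : E ≃L[ℝ] E) : E →L[ℝ] E) Set.univ K :=
    fun x _ y _ => hF x y
  refine ⟨happrox.toHomeomorph F ?_, rfl⟩
  rcases subsingleton_or_nontrivial E with hE | hE
  · exact .inl hE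
  · have hnorm : ‖((ContinuousLinearEquiv.refl ℝ E).symm : E →L[ℝ] E)‖₊ = 1 :=
      NNReal.coe_injective (ContinuousLinearMap.norm_id (𝕜 := ℝ) (E := E))
    exact .inr (by rwa [hnorm, inv_one])

theorem exists_homeomorph_push (c v : E) {R : ℝ} (hv : ‖v‖ < R) :
    ∃ φ : E ≃ₜ E, (∀ x y, x ≠ y → ‖φ x - φ y - (x - y)‖ < ‖x - y‖) ∧ φ c = c + v ∧
      ∀ z ∉ Metric.ball c R, φ z = z := by
  have hR : 0 < R := (norm_nonneg v).trans_lt hv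
  have hlt : ‖v‖ / R < 1 := (div_lt_one hR).2 hv
  let F : E → E := fun z => z + coneBump c R z • v
  have hF (x y : E) : ‖F x - F y - (x - y)‖ ≤ ‖v‖ / R * ‖x - y‖ := calc
    _ = |coneBump c R x - coneBump c R y| * ‖v‖ := by
      rw [← Real.norm_eq_abs, ← norm_smul, sub_smul]
      congr 1
      simp only [F]
      abel
    _ ≤ ‖x - y‖ / R * ‖v‖ := by gcongr; exact abs_coneBump_sub_le hR c x y
    _ = ‖v‖ / R * ‖x - y‖ := by ring
  obtain ⟨φ, hφ⟩ := exists_homeomorph_of_norm_sub_sub_le (K := ⟨‖v‖ / R, by positivity⟩) hlt hF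
  refine ⟨φ, fun x y hxy => ?_, by simp [hφ, F, coneBump], fun z hz => ?_⟩
  · rw [hφ]
    exact (hF x y).trans_lt (mul_lt_of_lt_one_left (norm_sub_pos_iff.2 hxy) hlt)
  · have hfar : 1 ≤ ‖z - c‖ / R := (one_le_div hR).2 (by simpa [dist_eq_norm] using hz)
    simp [hφ, F, coneBump, hfar]

end Push

theorem exists_hasDegree_one_move {c y z : ℂ} {R : ℝ} (hy : y ∈ Metric.ball c R)
    (hz : z ∈ Metric.ball c R) :
    ∃ φ : ℂ ≃ₜ ℂ, HasDegree φ 1 ∧ φ z = y ∧ ∀ w ∉ Metric.ball c R, φ w = w := by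
  obtain ⟨φ, hφ, hφc, hφ_id⟩ := exists_homeomorph_push c (y - c) (mem_ball_iff_norm.1 hy)
  obtain ⟨ψ, hψ, hψc, hψ_id⟩ := exists_homeomorph_push c (z - c) (mem_ball_iff_norm.1 hz)
  have hφ1 := hasDegree_one_of_norm_sub_sub_lt φ.continuous hφ
  have hψ1 := hasDegree_one_symm ψ (hasDegree_one_of_norm_sub_sub_lt ψ.continuous hψ)
  refine ⟨ψ.symm.trans φ, hφ1.comp hψ1 ψ.symm.continuous, ?_, fun w hw => ?_⟩
  · have hψz : ψ.symm z = c := ψ.symm_apply_eq.2 (by rw [hψc, add_sub_cancel])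
    simp [hψz, hφc]
  · have hψw : ψ.symm w = w := ψ.symm_apply_eq.2 (hψ_id w hw).symm
    simp [hψw, hφ_id w hw]

theorem comp_apply_ne_self_of_free {X : Type*} {h φ : X → X} {U : Set X} (hφ : φ.Injective)
    (hφU : ∀ z ∉ U, φ z = z) (hfix : ∀ z, h z ≠ z) (hfree : ∀ z ∈ U, h z ∉ U) (z : X) :
    φ (h z) ≠ z := by
  intro hz
  by_cases hhz : h z ∈ U
  · have hzU : z ∈ U := by
      by_contra hzU
      exact hzU (hφ (hz.trans (hφU z hzU).symm) ▸ hhz)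
    exact hfree z hzU hhz
  · exact hfix z ((hφU _ hhz).symm.trans hz)

theorem iterate_comp_eq_of_notMem {X : Type*} {h φ : X → X} {U : Set X}
    (hφU : ∀ z ∉ U, φ z = z) {n : ℕ} {y : X} (hy : ∀ i < n, h^[i + 1] y ∉ U) :
    (φ ∘ h)^[n + 1] y = φ (h^[n + 1] y) := by
  induction n with
  | zero => rfl
  | succ n ih =>
    rw [Function.iterate_succ_apply' (φ ∘ h), ih fun i hi => hy i (hi.trans n.lt_succ_self),
      hφU _ (hy n n.lt_succ_self), Function.comp_apply, ← Function.iterate_succ_apply' h]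

/-- An orbit segment returning to a free ball for the first time is closed up by a move supported
in the ball, which creates no fixed point. -/
theorem iterate_notMem_ball_of_free (h : ℂ ≃ₜ ℂ) (hdeg : HasDegree h 1) (hfix : ∀ z, h z ≠ z)
    {c : ℂ} {R : ℝ} (hfree : ∀ z ∈ Metric.ball c R, h z ∉ Metric.ball c R) {y : ℂ}
    (hy : y ∈ Metric.ball c R) (n : ℕ) : h^[n + 1] y ∉ Metric.ball c R := by
  induction n using Nat.strong_induction_on with
  | _ n ih =>
    intro hreturn
    obtain ⟨φ, hφ1, hφy, hφ_id⟩ := exists_hasDegree_one_move hy hreturn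
    exact iterate_ne_self_of_hasDegree_one (h.trans φ) (hφ1.comp hdeg h.continuous)
      (comp_apply_ne_self_of_free (h := h) φ.injective hφ_id hfix hfree) n.succ_ne_zero y
      ((iterate_comp_eq_of_notMem hφ_id ih).trans hφy)

end FreeBall

section CrossingPaths

theorem log_neg_of_im_pos {z : ℂ} (hz : 0 < z.im) :
    Complex.log (-z) = Complex.log z - Real.pi * Complex.I := by
  simp only [Complex.log, Complex.arg_neg_eq_arg_sub_pi_of_im_pos hz, norm_neg]
  push_cast
  ring

theorem log_neg_of_im_neg {z : ℂ} (hz : z.im < 0) :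
    Complex.log (-z) = Complex.log z + Real.pi * Complex.I := by
  simp only [Complex.log, Complex.arg_neg_eq_arg_add_pi_of_im_neg hz, norm_neg]
  push_cast
  ring

/-- Planar Poincaré–Miranda theorem: without a zero, a branch of `log g` over the square would
change by `2πi` around its boundary. -/
theorem exists_eq_zero_of_square_boundary {g : ℝ × ℝ → ℂ}
    (hg : ContinuousOn g (Set.Icc 0 1 ×ˢ Set.Icc 0 1))
    (hbottom : ∀ t ∈ Set.Icc (0 : ℝ) 1, 0 < (g (t, 0)).im)
    (htop : ∀ t ∈ Set.Icc (0 : ℝ) 1, (g (t, 1)).im < 0)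
    (hleft : ∀ u ∈ Set.Icc (0 : ℝ) 1, (g (0, u)).re < 0)
    (hright : ∀ u ∈ Set.Icc (0 : ℝ) 1, 0 < (g (1, u)).re) :
    ∃ p ∈ Set.Icc (0 : ℝ) 1 ×ˢ Set.Icc (0 : ℝ) 1, g p = 0 := by
  by_contra! hg0
  have h0 : (0 : ℝ) ∈ Set.Icc (0 : ℝ) 1 := Set.left_mem_Icc.2 zero_le_one
  have h1 : (1 : ℝ) ∈ Set.Icc (0 : ℝ) 1 := Set.right_mem_Icc.2 zero_le_one
  have hI : IsPreconnected (Set.Icc (0 : ℝ) 1) := isPreconnected_Icc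
  obtain ⟨l, hl, -⟩ := exists_isLogOn_of_convex ((convex_Icc (0 : ℝ) 1).prod (convex_Icc 0 1))
    hg hg0 (Set.mk_mem_prod h0 h0) (Complex.exp_log (hg0 _ (Set.mk_mem_prod h0 h0)))
  have along (φ : ℝ → ℝ × ℝ) (hφ : Continuous φ)
      (hmem : Set.MapsTo φ (Set.Icc 0 1) (Set.Icc 0 1 ×ˢ Set.Icc 0 1)) :
      ContinuousOn (g ∘ φ) (Set.Icc 0 1) ∧ IsLogOn (g ∘ φ) (l ∘ φ) (Set.Icc 0 1) :=
    ⟨hg.comp hφ.continuousOn hmem, hl.comp hφ.continuousOn hmem⟩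
  obtain ⟨gb, lb⟩ := along (·, 0) (by fun_prop) fun t ht => ⟨ht, h0⟩
  obtain ⟨gt, lt⟩ := along (·, 1) (by fun_prop) fun t ht => ⟨ht, h1⟩
  obtain ⟨gl, ll⟩ := along (0, ·) (by fun_prop) fun u hu => ⟨h0, hu⟩
  obtain ⟨gr, lr⟩ := along (1, ·) (by fun_prop) fun u hu => ⟨h1, hu⟩
  have bottom := lb.sub_eq_sub (isLogOn_log gb fun t ht => .inr (hbottom t ht).ne') hI h0 h1
  have top := lt.sub_eq_sub (isLogOn_log gt fun t ht => .inr (htop t ht).ne) hI h0 h1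
  have left := ll.add_pi_mul_I.sub_eq_sub
    (isLogOn_log gl.neg fun u hu => .inl (neg_pos.2 (hleft u hu))) hI h0 h1
  have right := lr.sub_eq_sub (isLogOn_log gr fun u hu => .inl (hright u hu)) hI h0 h1
  simp only [Function.comp_apply, log_neg_of_im_pos (hbottom 0 h0),
    log_neg_of_im_neg (htop 0 h0)] at bottom top left right
  exact Complex.two_pi_I_ne_zero (by linear_combination left + top - right - bottom)

theorem exists_eq_of_crossing {a b c d : ℝ × ℝ} (γ : Path a b) (σ : Path c d)
    (hbelow : ∀ t, c.2 < (γ t).2) (habove : ∀ t, (γ t).2 < d.2)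
    (hleft : ∀ u, a.1 < (σ u).1) (hright : ∀ u, (σ u).1 < b.1) : ∃ t u, γ t = σ u := by
  let g : ℝ × ℝ → ℂ := fun p => Complex.equivRealProdCLM.symm (γ.extend p.1 - σ.extend p.2)
  have hg : Continuous g := by fun_prop
  obtain ⟨⟨t, u⟩, ⟨ht, hu⟩, hzero⟩ := exists_eq_zero_of_square_boundary hg.continuousOn
    (fun t ht => by simpa [g, ht] using hbelow ⟨t, ht⟩)
    (fun t ht => by simpa [g, ht] using habove ⟨t, ht⟩)
    (fun u hu => by simpa [g, hu] using hleft ⟨u, hu⟩)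
    (fun u hu => by simpa [g, hu] using hright ⟨u, hu⟩)
  have hmeet := (map_eq_zero_iff _ Complex.equivRealProdCLM.symm.injective).1 hzero
  rw [γ.extend_apply ht, σ.extend_apply hu, sub_eq_zero] at hmeet
  exact ⟨_, _, hmeet⟩

end CrossingPaths

section Covering

theorem continuous_projA : Continuous projA :=
  ((AddCircle.continuous_mk' (1 : ℝ)).comp continuous_fst).prodMk continuous_snd

theorem isOpenMap_projA : IsOpenMap projA :=
  IsOpenMap.prodMap QuotientAddGroup.isOpenMap_coe IsOpenMap.id

theorem surjective_projA : projA.Surjective :=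
  QuotientAddGroup.mk_surjective.prodMap Function.surjective_id

theorem projA_eq_projA_iff {z w : ℝ × ℝ} :
    projA z = projA w ↔ ∃ l : ℤ, z + l • (1, 0) = w := by
  rw [eq_comm, projA, projA, Prod.mk.injEq, ← sub_eq_zero, ← AddCircle.coe_sub,
    AddCircle.coe_eq_zero_iff]
  simp only [Prod.ext_iff, Prod.fst_add, Prod.snd_add, Prod.smul_fst, Prod.smul_snd, smul_zero,
    add_zero, exists_and_right, eq_sub_iff_add_eq', @eq_comm _ w.2]

theorem exists_lift_path {x y : Ann} (P : Path x y) :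
    ∃ (z w : ℝ × ℝ) (Q : Path z w), projA z = x ∧ projA w = y ∧ ∀ t, projA (Q t) = P t := by
  obtain ⟨z, hz⟩ := surjective_projA x
  let θ : C(unitInterval, AddCircle (1 : ℝ)) := ⟨fun t => (P t).1, by fun_prop⟩
  have hθ : θ 0 = (z.1 : AddCircle (1 : ℝ)) := congrArg Prod.fst (P.source.trans hz.symm)
  have hcov := AddCircle.isCoveringMap_coe (1 : ℝ)
  let Q : C(unitInterval, ℝ × ℝ) := ⟨fun t => (hcov.liftPath θ z.1 hθ t, (P t).2), by fun_prop⟩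
  have hQ (t : unitInterval) : projA (Q t) = P t :=
    Prod.ext (congrFun (hcov.liftPath_lifts θ z.1 hθ) t) rfl
  exact ⟨Q 0, Q 1, ⟨Q, rfl, rfl⟩, (hQ 0).trans P.source, (hQ 1).trans P.target, hQ⟩

instance : LocallyPathConnectedSpace Ann :=
  (isOpenMap_projA.isQuotientMap continuous_projA surjective_projA).locallyPathConnectedSpace

end Covering

section EssentialLoops

theorem joinedIn_add_zsmul {E : Type*} [AddCommGroup E] [TopologicalSpace E] [ContinuousAdd E]
    {S : Set E} {a v : E} (hS : ∀ z ∈ S, ∀ m : ℤ, z + m • v ∈ S) (h : JoinedIn S a (a + v))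
    (m : ℤ) (n : ℕ) : JoinedIn S (a + m • v) (a + (m + n) • v) := by
  induction n with
  | zero => simpa using JoinedIn.refl (hS a h.source_mem m)
  | succ n ih =>
    have hstep := (h.map_continuousOn (f := (· + (m + n) • v)) (by fun_prop)).mono
      (Set.image_subset_iff.2 fun z hz => hS z hz (m + n))
    have hend : a + v + (m + n) • v = a + (m + (n + 1 : ℕ)) • v := by
      push_cast
      module
    exact ih.trans (hend ▸ hstep)

theorem exists_mem_of_joinedIn_translate {S : Set (ℝ × ℝ)} {a c d : ℝ × ℝ} {v M : ℝ} (hv : 0 < v)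
    (hS : ∀ z ∈ S, ∀ m : ℤ, z + m • (v, 0) ∈ S) (hjoin : JoinedIn S a (a + (v, 0)))
    (hM : ∀ z ∈ S, |z.2| ≤ M) (σ : Path c d) (hc : c.2 < -M) (hd : M < d.2) : ∃ u, σ u ∈ S := by
  obtain ⟨R, hR⟩ := isCompact_univ.exists_bound_of_continuousOn
    (f := fun u => (σ u).1 - a.1) (by fun_prop)
  obtain ⟨N, hN⟩ := exists_lt_nsmul hv R
  rw [nsmul_eq_mul] at hN
  have hfst (m : ℤ) : (a + m • (v, (0 : ℝ))).1 = a.1 + m * v := by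
    rw [Prod.fst_add, Prod.smul_fst, zsmul_eq_mul]
  have hwidth (u : unitInterval) := abs_lt.1 ((hR u trivial).trans_lt hN)
  obtain ⟨γ, hγ⟩ := joinedIn_add_zsmul hS hjoin (-N : ℤ) (2 * N)
  have hheight (t : unitInterval) := abs_le.1 (hM _ (hγ t))
  obtain ⟨t, u, hmeet⟩ := exists_eq_of_crossing γ σ (fun t => hc.trans_le (hheight t).1)
    (fun t => (hheight t).2.trans_lt hd)
    (fun u => by rw [hfst]; push_cast; linarith [(hwidth u).1])
    (fun u => by rw [hfst]; push_cast; linarith [(hwidth u).2])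
  exact ⟨u, hmeet ▸ hγ t⟩

theorem essentialA_of_joinedIn_translate {Γ : Set Ann} (hΓ : IsCompact Γ) {a : ℝ × ℝ} {k : ℕ}
    (hk : k ≠ 0) (hjoin : JoinedIn (projA ⁻¹' Γ) a (a + ((k : ℝ), 0))) : EssentialA Γ := by
  rintro x hx ⟨habove, hbelow⟩
  obtain ⟨M, hM⟩ := hΓ.exists_bound_of_continuousOn (f := Prod.snd) continuousOn_snd
  have hpath := hΓ.isClosed.isOpen_compl.connectedComponentIn.isConnected_iff_isPathConnected.1
    (isConnected_connectedComponentIn_iff.2 hx)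
  obtain ⟨_, ⟨u, hu, rfl⟩, hMu⟩ := not_bddAbove_iff.1 habove M
  obtain ⟨_, ⟨v, hv, rfl⟩, hvM⟩ := not_bddBelow_iff.1 hbelow (-M)
  obtain ⟨P, hP⟩ := hpath.joinedIn v hv u hu
  obtain ⟨c, d, Q, rfl, rfl, hQ⟩ := exists_lift_path P
  have hinv (z : ℝ × ℝ) (hz : z ∈ projA ⁻¹' Γ) (m : ℤ) :
      z + m • ((k : ℝ), 0) ∈ projA ⁻¹' Γ := by
    have hfibre : projA z = projA (z + m • ((k : ℝ), 0)) :=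
      projA_eq_projA_iff.2 ⟨m * k, by ext <;> simp⟩
    rwa [Set.mem_preimage, ← hfibre]
  obtain ⟨t, ht⟩ := exists_mem_of_joinedIn_translate (Nat.cast_pos.2 hk.bot_lt) hinv hjoin
    (fun z hz => hM _ hz) Q hvM hMu
  exact connectedComponentIn_subset _ _ (hP t) (hQ t ▸ ht)

end EssentialLoops

section ComplementComponents

variable {X : Type*} [TopologicalSpace X]

theorem connectedComponentIn_eq_of_inter_nonempty {F A : Set X} (hA : IsPreconnected A)
    (hAF : A ⊆ F) {x y : X} (hx : (connectedComponentIn F x ∩ A).Nonempty)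
    (hy : (connectedComponentIn F y ∩ A).Nonempty) :
    connectedComponentIn F x = connectedComponentIn F y := by
  obtain ⟨p, hpx, hpA⟩ := hx
  obtain ⟨q, hqy, hqA⟩ := hy
  rw [connectedComponentIn_eq hpx, connectedComponentIn_eq hqy]
  exact connectedComponentIn_eq (hA.subset_connectedComponentIn hpA hAF hqA)

theorem connectedComponentIn_eq_of_subset {F F' : Set X} (hF : F' ⊆ F) {x : X} (hx : x ∈ F)
    (hcomp : connectedComponentIn F x ⊆ F') :
    connectedComponentIn F' x = connectedComponentIn F x :=
  (connectedComponentIn_mono x hF).antisymm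
    (isPreconnected_connectedComponentIn.subset_connectedComponentIn
      (mem_connectedComponentIn hx) hcomp)

variable [LocallyConnectedSpace X] {Γ : Set X}

theorem closure_connectedComponentIn_compl_subset (hΓ : IsClosed Γ) (x : X) :
    closure (connectedComponentIn Γᶜ x) ⊆ connectedComponentIn Γᶜ x ∪ Γ := by
  intro p hp
  by_cases hpΓ : p ∈ Γ
  · exact .inr hpΓ
  obtain ⟨q, hqp, hqx⟩ := mem_closure_iff.1 hp _ hΓ.isOpen_compl.connectedComponentIn
    (mem_connectedComponentIn hpΓ)
  left
  rw [connectedComponentIn_eq hqx, ← connectedComponentIn_eq hqp]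
  exact mem_connectedComponentIn hpΓ

variable [PreconnectedSpace X]

theorem closure_connectedComponentIn_compl_inter_nonempty (hΓ : IsClosed Γ) (hne : Γ.Nonempty)
    {x : X} (hx : x ∈ Γᶜ) : (closure (connectedComponentIn Γᶜ x) ∩ Γ).Nonempty := by
  have hproper : connectedComponentIn Γᶜ x ≠ Set.univ := by
    rintro huniv
    obtain ⟨y, hy⟩ := hne
    exact connectedComponentIn_subset Γᶜ x (huniv ▸ Set.mem_univ y) hy
  obtain ⟨p, hp_closure, hp_interior⟩ :=
    nonempty_frontier_iff.2 ⟨⟨x, mem_connectedComponentIn hx⟩, hproper⟩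
  rw [hΓ.isOpen_compl.connectedComponentIn.interior_eq] at hp_interior
  exact ⟨p, hp_closure,
    (closure_connectedComponentIn_compl_subset hΓ x hp_closure).resolve_left hp_interior⟩

theorem isConnected_of_connectedComponentIn_compl_subset {E : Set X} (hΓ : IsClosed Γ)
    (hconn : IsConnected Γ) (hΓE : Γ ⊆ E)
    (hE : ∀ x ∈ E, x ∉ Γ → connectedComponentIn Γᶜ x ⊆ E) : IsConnected E := by
  obtain ⟨c, hc⟩ := hconn.nonempty
  refine ⟨⟨c, hΓE hc⟩, isPreconnected_of_forall c fun x hx => ?_⟩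
  by_cases hxΓ : x ∈ Γ
  · exact ⟨Γ, hΓE, hc, hxΓ, hconn.isPreconnected⟩
  obtain ⟨p, hp, hpΓ⟩ := closure_connectedComponentIn_compl_inter_nonempty hΓ ⟨c, hc⟩ hxΓ
  refine ⟨closure (connectedComponentIn Γᶜ x) ∪ Γ, ?_, .inr hc,
    .inl (subset_closure (mem_connectedComponentIn hxΓ)),
    IsPreconnected.union p hp hpΓ isPreconnected_connectedComponentIn.closure
      hconn.isPreconnected⟩
  exact Set.union_subset ((closure_connectedComponentIn_compl_subset hΓ x).trans
    (Set.union_subset (hE x hx hxΓ) hΓE)) hΓE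

end ComplementComponents

section FilledContinua

theorem isPreconnected_snd_preimage {s : Set ℝ} (hs : IsPreconnected s) :
    IsPreconnected (Prod.snd ⁻¹' s : Set Ann) := by
  rw [← Set.univ_prod]
  exact isPreconnected_univ.prod hs

theorem UnbAbove.mono {S S' : Set Ann} (hS : UnbAbove S) (hSS' : S ⊆ S') : UnbAbove S' :=
  mt (·.mono (Set.image_mono hSS')) hS

theorem UnbBelow.mono {S S' : Set Ann} (hS : UnbBelow S) (hSS' : S ⊆ S') : UnbBelow S' :=
  mt (·.mono (Set.image_mono hSS')) hS

theorem unbAbove_snd_preimage_Ioi (M : ℝ) : UnbAbove (Prod.snd ⁻¹' Set.Ioi M) := by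
  rw [UnbAbove, Set.image_preimage_eq _ Prod.snd_surjective]
  exact not_bddAbove_Ioi M

theorem unbBelow_snd_preimage_Iio (M : ℝ) : UnbBelow (Prod.snd ⁻¹' Set.Iio M) := by
  rw [UnbBelow, Set.image_preimage_eq _ Prod.snd_surjective]
  exact not_bddBelow_Iio M

variable {Γ : Set Ann}

theorem upperComp_eq_of_isClosed (hΓ : IsClosed Γ) :
    upperComp Γ = {z ∈ Γᶜ | UnbAbove (connectedComponentIn Γᶜ z)} := by
  rw [upperComp, hΓ.closure_eq]

theorem lowerComp_eq_of_isClosed (hΓ : IsClosed Γ) :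
    lowerComp Γ = {z ∈ Γᶜ | UnbBelow (connectedComponentIn Γᶜ z)} := by
  rw [lowerComp, hΓ.closure_eq]

theorem subset_upperComp (hΓ : IsClosed Γ) {K : Set Ann} (hK : IsPreconnected K) (hKΓ : K ⊆ Γᶜ)
    (hunb : UnbAbove K) : K ⊆ upperComp Γ := by
  rw [upperComp_eq_of_isClosed hΓ]
  exact fun z hz => ⟨hKΓ hz, hunb.mono (hK.subset_connectedComponentIn hz hKΓ)⟩

theorem subset_lowerComp (hΓ : IsClosed Γ) {K : Set Ann} (hK : IsPreconnected K) (hKΓ : K ⊆ Γᶜ)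
    (hunb : UnbBelow K) : K ⊆ lowerComp Γ := by
  rw [lowerComp_eq_of_isClosed hΓ]
  exact fun z hz => ⟨hKΓ hz, hunb.mono (hK.subset_connectedComponentIn hz hKΓ)⟩

theorem exists_snd_preimage_Ioi_Iio_subset_compl (hΓ : IsCompact Γ) :
    ∃ M : ℝ, Prod.snd ⁻¹' Set.Ioi M ⊆ Γᶜ ∧ Prod.snd ⁻¹' Set.Iio (-M) ⊆ Γᶜ := by
  obtain ⟨M, hM⟩ := hΓ.exists_bound_of_continuousOn (f := Prod.snd) continuousOn_snd
  exact ⟨M, fun z hz hzΓ => (abs_le.1 (hM z hzΓ)).2.not_gt hz,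
    fun z hz hzΓ => (abs_le.1 (hM z hzΓ)).1.not_gt hz⟩

theorem upperComp_nonempty (hΓ : IsCompact Γ) : (upperComp Γ).Nonempty := by
  obtain ⟨M, hM, -⟩ := exists_snd_preimage_Ioi_Iio_subset_compl hΓ
  exact ⟨(0, M + 1), subset_upperComp hΓ.isClosed (isPreconnected_snd_preimage isPreconnected_Ioi)
    hM (unbAbove_snd_preimage_Ioi M) (lt_add_one M)⟩

theorem lowerComp_nonempty (hΓ : IsCompact Γ) : (lowerComp Γ).Nonempty := by
  obtain ⟨M, -, hM⟩ := exists_snd_preimage_Ioi_Iio_subset_compl hΓ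
  exact ⟨(0, -M - 1), subset_lowerComp hΓ.isClosed
    (isPreconnected_snd_preimage isPreconnected_Iio) hM (unbBelow_snd_preimage_Iio (-M))
    (sub_one_lt (-M))⟩

theorem connectedComponentIn_eq_of_mem_upperComp (hΓ : IsCompact Γ) {z w : Ann}
    (hz : z ∈ upperComp Γ) (hw : w ∈ upperComp Γ) :
    connectedComponentIn Γᶜ z = connectedComponentIn Γᶜ w := by
  obtain ⟨M, hM, -⟩ := exists_snd_preimage_Ioi_Iio_subset_compl hΓ
  rw [upperComp_eq_of_isClosed hΓ.isClosed] at hz hw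
  have meets {S : Set Ann} (hS : UnbAbove S) : (S ∩ Prod.snd ⁻¹' Set.Ioi M).Nonempty := by
    obtain ⟨_, ⟨p, hp, rfl⟩, hMp⟩ := not_bddAbove_iff.1 hS M
    exact ⟨p, hp, hMp⟩
  exact connectedComponentIn_eq_of_inter_nonempty (isPreconnected_snd_preimage isPreconnected_Ioi)
    hM (meets hz.2) (meets hw.2)

theorem connectedComponentIn_eq_of_mem_lowerComp (hΓ : IsCompact Γ) {z w : Ann}
    (hz : z ∈ lowerComp Γ) (hw : w ∈ lowerComp Γ) :
    connectedComponentIn Γᶜ z = connectedComponentIn Γᶜ w := by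
  obtain ⟨M, -, hM⟩ := exists_snd_preimage_Ioi_Iio_subset_compl hΓ
  rw [lowerComp_eq_of_isClosed hΓ.isClosed] at hz hw
  have meets {S : Set Ann} (hS : UnbBelow S) : (S ∩ Prod.snd ⁻¹' Set.Iio (-M)).Nonempty := by
    obtain ⟨_, ⟨p, hp, rfl⟩, hpM⟩ := not_bddBelow_iff.1 hS (-M)
    exact ⟨p, hp, hpM⟩
  exact connectedComponentIn_eq_of_inter_nonempty (isPreconnected_snd_preimage isPreconnected_Iio)
    hM (meets hz.2) (meets hw.2)

theorem connectedComponentIn_subset_upperComp (hΓ : IsClosed Γ) {z : Ann}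
    (hz : z ∈ upperComp Γ) : connectedComponentIn Γᶜ z ⊆ upperComp Γ := by
  rw [upperComp_eq_of_isClosed hΓ] at hz
  exact subset_upperComp hΓ isPreconnected_connectedComponentIn (connectedComponentIn_subset _ _)
    hz.2

theorem connectedComponentIn_subset_lowerComp (hΓ : IsClosed Γ) {z : Ann}
    (hz : z ∈ lowerComp Γ) : connectedComponentIn Γᶜ z ⊆ lowerComp Γ := by
  rw [lowerComp_eq_of_isClosed hΓ] at hz
  exact subset_lowerComp hΓ isPreconnected_connectedComponentIn (connectedComponentIn_subset _ _)
    hz.2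

/-- The filling of a compact set `Γ`: its union with the components of `Γᶜ` that are bounded in the
`ℝ`-coordinate. -/
def fillA (Γ : Set Ann) : Set Ann := (upperComp Γ ∪ lowerComp Γ)ᶜ

theorem mem_compl_fillA {z : Ann} : z ∈ (fillA Γ)ᶜ ↔ z ∈ upperComp Γ ∨ z ∈ lowerComp Γ := by
  rw [fillA, compl_compl, Set.mem_union]

theorem compl_fillA_subset_compl (hΓ : IsClosed Γ) : (fillA Γ)ᶜ ⊆ Γᶜ := by
  intro z hz
  rw [mem_compl_fillA, upperComp_eq_of_isClosed hΓ, lowerComp_eq_of_isClosed hΓ] at hz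
  exact hz.elim And.left And.left

theorem subset_fillA (hΓ : IsClosed Γ) : Γ ⊆ fillA Γ :=
  Set.compl_subset_compl.1 (compl_fillA_subset_compl hΓ)

theorem connectedComponentIn_subset_compl_fillA (hΓ : IsClosed Γ) {z : Ann}
    (hz : z ∈ (fillA Γ)ᶜ) : connectedComponentIn Γᶜ z ⊆ (fillA Γ)ᶜ := by
  intro w hw
  rw [mem_compl_fillA] at hz ⊢
  exact hz.imp (connectedComponentIn_subset_upperComp hΓ · hw)
    (connectedComponentIn_subset_lowerComp hΓ · hw)

theorem connectedComponentIn_compl_fillA (hΓ : IsClosed Γ) {z : Ann} (hz : z ∈ (fillA Γ)ᶜ) :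
    connectedComponentIn (fillA Γ)ᶜ z = connectedComponentIn Γᶜ z :=
  connectedComponentIn_eq_of_subset (compl_fillA_subset_compl hΓ)
    (compl_fillA_subset_compl hΓ hz) (connectedComponentIn_subset_compl_fillA hΓ hz)

theorem isClosed_fillA (hΓ : IsClosed Γ) : IsClosed (fillA Γ) :=
  ⟨isOpen_iff_forall_mem_open.2 fun z hz => ⟨connectedComponentIn Γᶜ z,
    connectedComponentIn_subset_compl_fillA hΓ hz, hΓ.isOpen_compl.connectedComponentIn,
    mem_connectedComponentIn (compl_fillA_subset_compl hΓ hz)⟩⟩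

theorem isCompact_fillA (hΓ : IsCompact Γ) : IsCompact (fillA Γ) := by
  obtain ⟨M, hM_above, hM_below⟩ := exists_snd_preimage_Ioi_Iio_subset_compl hΓ
  have hupper := subset_upperComp hΓ.isClosed (isPreconnected_snd_preimage isPreconnected_Ioi)
    hM_above (unbAbove_snd_preimage_Ioi M)
  have hlower := subset_lowerComp hΓ.isClosed (isPreconnected_snd_preimage isPreconnected_Iio)
    hM_below (unbBelow_snd_preimage_Iio (-M))
  have hstrip : IsCompact (Set.univ ×ˢ Set.Icc (-M) M : Set Ann) :=
    isCompact_univ.prod isCompact_Icc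
  refine hstrip.of_isClosed_subset (isClosed_fillA hΓ.isClosed) fun z hz => ⟨trivial, ?_, ?_⟩
  · exact not_lt.1 fun hlt => hz (.inr (hlower hlt))
  · exact not_lt.1 fun hlt => hz (.inl (hupper hlt))

theorem isConnected_fillA (hΓ : IsClosed Γ) (hconn : IsConnected Γ) : IsConnected (fillA Γ) := by
  refine isConnected_of_connectedComponentIn_compl_subset hΓ hconn (subset_fillA hΓ)
    fun x hx hxΓ w hw => ?_
  by_contra hw_fill
  refine connectedComponentIn_subset_compl_fillA hΓ hw_fill ?_ hx
  exact connectedComponentIn_eq hw ▸ mem_connectedComponentIn hxΓ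

theorem EssentialA.isAnnularContinuum_fillA (hess : EssentialA Γ) (hΓ : IsCompact Γ)
    (hconn : IsConnected Γ) : IsAnnularContinuum (fillA Γ) := by
  have hcl := hΓ.isClosed
  obtain ⟨u, hu⟩ := upperComp_nonempty hΓ
  obtain ⟨v, hv⟩ := lowerComp_nonempty hΓ
  have hu_fill := mem_compl_fillA.2 (.inl hu)
  have hv_fill := mem_compl_fillA.2 (.inr hv)
  have hupper := upperComp_eq_of_isClosed hcl
  have hlower := lowerComp_eq_of_isClosed hcl
  refine ⟨isCompact_fillA hΓ, isConnected_fillA hcl hconn, fun z hz hbdd => ?_, u, v, hu_fill,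
    hv_fill, ?_, fun z hz => ?_⟩
  · rw [connectedComponentIn_compl_fillA hcl hz] at hbdd
    rcases mem_compl_fillA.1 hz with hz | hz
    · exact (hupper ▸ hz).2 hbdd.1
    · exact (hlower ▸ hz).2 hbdd.2
  · rw [connectedComponentIn_compl_fillA hcl hu_fill, connectedComponentIn_compl_fillA hcl hv_fill]
    intro heq
    exact hess u (hupper ▸ hu).1 ⟨(hupper ▸ hu).2, heq ▸ (hlower ▸ hv).2⟩
  · rw [connectedComponentIn_compl_fillA hcl hz, connectedComponentIn_compl_fillA hcl hu_fill,
      connectedComponentIn_compl_fillA hcl hv_fill]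
    exact (mem_compl_fillA.1 hz).imp (connectedComponentIn_eq_of_mem_upperComp hΓ · hu)
      (connectedComponentIn_eq_of_mem_lowerComp hΓ · hv)

theorem fillA_subset {C : Set Ann} (hΓ : IsClosed Γ) (hΓC : Γ ⊆ C)
    (hC : ∀ x ∈ Cᶜ, ¬ BoundedA (connectedComponentIn Cᶜ x)) : fillA Γ ⊆ C := by
  intro x hx
  by_contra hxC
  have hcompl := (connectedComponentIn_subset Cᶜ x).trans (Set.compl_subset_compl.2 hΓC)
  have hmem := mem_connectedComponentIn (F := Cᶜ) hxC
  rcases not_and_or.1 (hC x hxC) with habove | hbelow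
  · exact hx (.inl (subset_upperComp hΓ isPreconnected_connectedComponentIn hcompl habove hmem))
  · exact hx (.inr (subset_lowerComp hΓ isPreconnected_connectedComponentIn hcompl hbelow hmem))

end FilledContinua

section CircloidInterior

variable {C : Set Ann}

theorem IsCircloidA.not_subset_interior (hC : IsCircloidA C) {Γ : Set Ann} (hΓ : IsCompact Γ)
    (hconn : IsConnected Γ) (hess : EssentialA Γ) : ¬ Γ ⊆ interior C := by
  intro hΓC
  have hfill : fillA Γ = C :=
    hC.2 _ (fillA_subset hΓ.isClosed (hΓC.trans interior_subset) hC.1.2.2.1)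
      (hess.isAnnularContinuum_fillA hΓ hconn)
  obtain ⟨u, hu⟩ := upperComp_nonempty hΓ
  have huΓ : u ∈ Γᶜ := compl_fillA_subset_compl hΓ.isClosed (mem_compl_fillA.2 (.inl hu))
  obtain ⟨p, hp, hpΓ⟩ :=
    closure_connectedComponentIn_compl_inter_nonempty hΓ.isClosed hconn.nonempty huΓ
  obtain ⟨q, hqC, hqu⟩ := mem_closure_iff.1 hp _ isOpen_interior (hΓC hpΓ)
  have hq_fill : q ∈ fillA Γ := hfill ▸ interior_subset hqC
  exact hq_fill (.inl (connectedComponentIn_subset_upperComp hΓ.isClosed hu hqu))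

theorem IsCircloidA.add_natCast_notMem_connectedComponentIn (hC : IsCircloidA C) {x : ℝ × ℝ}
    (hx : x ∈ projA ⁻¹' interior C) {k : ℕ} (hk : k ≠ 0) :
    x + ((k : ℝ), 0) ∉ connectedComponentIn (projA ⁻¹' interior C) x := by
  intro hmem
  have hopen : IsOpen (projA ⁻¹' interior C) := isOpen_interior.preimage continuous_projA
  have hpath := hopen.connectedComponentIn.isConnected_iff_isPathConnected.1
    (isConnected_connectedComponentIn_iff.2 hx)
  obtain ⟨P, hP⟩ := hpath.joinedIn x (mem_connectedComponentIn hx) _ hmem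
  have hloop : Continuous (projA ∘ P) := continuous_projA.comp P.continuous
  refine hC.not_subset_interior (isCompact_range hloop) (isConnected_range hloop)
    (essentialA_of_joinedIn_translate (isCompact_range hloop) hk ⟨P, Set.mem_range_self⟩) ?_
  exact Set.range_subset_iff.2 fun t => connectedComponentIn_subset (projA ⁻¹' interior C) x (hP t)

end CircloidInterior

section Recurrence

variable {X Y : Type*} [TopologicalSpace X] [TopologicalSpace Y]

/-- `h` is non-wandering on `D`: every nonempty open subset of `D` meets one of its forward
images. -/
def NonWanderingOn (h : X → X) (D : Set X) : Prop :=
  ∀ V ⊆ D, IsOpen V → V.Nonempty → ∃ n : ℕ, 1 ≤ n ∧ ∃ z ∈ V, h^[n] z ∈ V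

theorem NonWanderingOn.conj {h : X → X} {D : Set X} (hD : NonWanderingOn h D) (e : X ≃ₜ Y) :
    NonWanderingOn (e ∘ h ∘ e.symm) (e '' D) := by
  intro V hVD hV hne
  have hconj : Function.Semiconj e h (e ∘ h ∘ e.symm) := fun z => by simp
  obtain ⟨n, hn, z, hz, hreturn⟩ := hD (e ⁻¹' V)
    (fun z hz => e.injective.mem_set_image.1 (hVD hz)) (hV.preimage e.continuous)
    (hne.preimage e.surjective)
  exact ⟨n, hn, e z, hz, (hconj.iterate_right n z).symm ▸ hreturn⟩

/-- Of two consecutive returns, one takes an even time unless both are odd, and then their sum is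
even. -/
theorem NonWanderingOn.comp_self {h : X → X} {D : Set X} (hD : NonWanderingOn h D)
    (hcont : Continuous h) : NonWanderingOn (h ∘ h) D := by
  intro V hVD hV hne
  have of_even {q : ℕ} (hq : 1 ≤ q) (heven : Even q) {z : X} (hz : z ∈ V) (hqz : h^[q] z ∈ V) :
      ∃ n : ℕ, 1 ≤ n ∧ ∃ z ∈ V, (h ∘ h)^[n] z ∈ V := by
    obtain ⟨n, rfl⟩ := heven.two_dvd
    exact ⟨n, by lia, z, hz, Function.iterate_mul h 2 n ▸ hqz⟩
  obtain ⟨p, hp, x, hx, hpx⟩ := hD V hVD hV hne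
  obtain ⟨q, hq, y, ⟨hy, -⟩, hqy, hpqy⟩ := hD (V ∩ h^[p] ⁻¹' V)
    (Set.inter_subset_left.trans hVD) (hV.inter (hV.preimage (hcont.iterate p))) ⟨x, hx, hpx⟩
  rcases Nat.even_or_odd p with hp_even | hp_odd
  · exact of_even hp hp_even hx hpx
  rcases Nat.even_or_odd q with hq_even | hq_odd
  · exact of_even hq hq_even hy hqy
  · exact of_even (by lia) (hp_odd.add_odd hq_odd) hy
      (Function.iterate_add_apply h p q y ▸ hpqy)

theorem not_nonWanderingOn_of_hasDegree_one (h : ℂ ≃ₜ ℂ) (hdeg : HasDegree h 1)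
    (hfix : ∀ z, h z ≠ z) {D : Set ℂ} (hD : IsOpen D) (hne : D.Nonempty) :
    ¬ NonWanderingOn h D := by
  intro hrec
  obtain ⟨x, hx⟩ := hne
  obtain ⟨u, v, hu, hv, hxu, hxv, hdisj⟩ := t2_separation (hfix x).symm
  obtain ⟨R, hR, hball⟩ := Metric.isOpen_iff.1 ((hu.inter (hv.preimage h.continuous)).inter hD) x
    ⟨⟨hxu, hxv⟩, hx⟩
  have hfree (z : ℂ) (hz : z ∈ Metric.ball x R) : h z ∉ Metric.ball x R := fun hhz =>
    Set.disjoint_left.1 hdisj (hball hhz).1.1 (hball hz).1.2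
  obtain ⟨n, hn, z, hz, hreturn⟩ := hrec _ (fun z hz => (hball hz).2) Metric.isOpen_ball
    ⟨x, Metric.mem_ball_self hR⟩
  obtain ⟨n, rfl⟩ := Nat.exists_eq_add_of_le' hn
  exact iterate_notMem_ball_of_free h hdeg hfix hfree hz n hreturn

/-- Squaring makes the homeomorphism preserve orientation, so that Brouwer's lemma applies. -/
theorem NonWanderingOn.exists_apply_apply_eq_self {H : X ≃ₜ X} {D : Set X}
    (hrec : NonWanderingOn H D) (hD : IsOpen D) (hne : D.Nonempty) (e : X ≃ₜ ℂ) :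
    ∃ z, H (H z) = z := by
  by_contra! hfix
  let h : ℂ ≃ₜ ℂ := e.symm.trans (H.trans e)
  refine not_nonWanderingOn_of_hasDegree_one (h.trans h) (hasDegree_comp_self h) (fun z hz => ?_)
    (e.isOpenMap D hD) (hne.image e) ((hrec.conj e).comp_self h.continuous)
  exact hfix (e.symm z) (e.injective (by simpa [h] using hz))

end Recurrence

section Stabilizers

theorem exists_zpow_mul_pow_generator {𝒢 : Type*} [Group 𝒢] {S : Subgroup 𝒢} {T g : 𝒢}
    (hcomm : Commute T g) (hT : ∀ k : ℤ, T ^ k ∈ S → k = 0)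
    (hex : ∃ n : ℕ, 1 ≤ n ∧ ∃ k : ℤ, T ^ k * g ^ n ∈ S) :
    ∃ n : ℕ, 1 ≤ n ∧ ∃ k : ℤ, ∀ (m : ℕ) (l : ℤ), T ^ l * g ^ m ∈ S →
      ∃ q : ℕ, m = n * q ∧ T ^ l * g ^ m = (T ^ k * g ^ n) ^ q := by
  classical
  obtain ⟨hn, k, hk⟩ := Nat.find_spec hex
  have hmin (m : ℕ) (hm : m < Nat.find hex) := Nat.find_min hex hm
  set n := Nat.find hex
  refine ⟨n, hn, k, fun m l hml => ⟨m / n, ?_⟩⟩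
  set q := m / n
  have hdiv : n * q + m % n = m := Nat.div_add_mod m n
  have hfactor : (T ^ k * g ^ n) ^ q * (T ^ (l - k * q) * g ^ (m % n)) = T ^ l * g ^ m := by
    rw [((hcomm.zpow_left k).pow_right n).mul_pow, ← pow_mul, ← zpow_natCast, ← zpow_mul,
      ((hcomm.symm.pow_left (n * q)).zpow_right _).mul_mul_mul_comm, ← zpow_add, ← pow_add, hdiv,
      add_sub_cancel]
  have hrem : T ^ (l - k * q) * g ^ (m % n) ∈ S :=
    (S.mul_mem_cancel_left (S.pow_mem hk q)).1 (hfactor ▸ hml)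
  have hmod : m % n = 0 := by
    by_contra hmod
    exact hmin _ (Nat.mod_lt m hn) ⟨Nat.one_le_iff_ne_zero.2 hmod, _, hrem⟩
  rw [hmod, pow_zero, mul_one] at hrem hfactor
  rw [hT _ hrem, zpow_zero, mul_one] at hfactor
  exact ⟨by lia, hfactor.symm⟩

variable {X : Type*} [TopologicalSpace X]

/-- The group of homeomorphisms of `X` mapping `S` onto itself. -/
def homeoStabilizer (S : Set X) : Subgroup (X ≃ₜ X) where
  carrier := {g | g '' S = S}
  one_mem' := Set.image_id S
  mul_mem' {g h} hg hh := by
    change (g ∘ h) '' S = S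
    rw [Set.image_comp, show h '' S = S from hh, show g '' S = S from hg]
  inv_mem' {g} hg := by
    change g.symm '' S = S
    rw [g.symm.image_eq_preimage_symm, g.symm_symm, ← g.injective.image_injective.eq_iff,
      Set.image_preimage_eq _ g.surjective, show g '' S = S from hg]

theorem mem_homeoStabilizer_connectedComponentIn {W : Set X} {g : X ≃ₜ X}
    (hg : g ∈ homeoStabilizer W) {x z : X} (hz : z ∈ connectedComponentIn W x)
    (hgz : g z ∈ connectedComponentIn W x) : g ∈ homeoStabilizer (connectedComponentIn W x) := by
  have himage := g.image_connectedComponentIn (connectedComponentIn_subset _ _ hz)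
  rwa [show g '' W = W from hg, ← connectedComponentIn_eq hgz, ← connectedComponentIn_eq hz]
    at himage

end Stabilizers

section Lifts

theorem coe_homeomorph_pow {X : Type*} [TopologicalSpace X] (g : X ≃ₜ X) (n : ℕ) :
    ⇑(g ^ n) = g^[n] :=
  hom_coe_pow _ rfl (fun _ _ => rfl) g n

/-- The generator `z ↦ z + (1, 0)` of the deck transformation group of `projA`. -/
def deck : (ℝ × ℝ) ≃ₜ (ℝ × ℝ) := Homeomorph.addRight (1, 0)

theorem deck_zpow_apply (l : ℤ) (z : ℝ × ℝ) : (deck ^ l) z = z + l • (1, 0) := by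
  have hnat (n : ℕ) (w : ℝ × ℝ) : (deck ^ n) w = w + n • (1, 0) := by
    rw [coe_homeomorph_pow]
    exact add_right_iterate_apply _ _
  obtain ⟨n, rfl | rfl⟩ := l.eq_nat_or_neg
  · rw [zpow_natCast, hnat, natCast_zsmul]
  · rw [zpow_neg, zpow_natCast]
    refine (deck ^ n).symm_apply_eq.2 ?_
    rw [hnat, neg_smul, natCast_zsmul, neg_add_cancel_right]

theorem deck_mem_homeoStabilizer_preimage (A : Set Ann) :
    deck ∈ homeoStabilizer (projA ⁻¹' A) := by
  have hproj : projA ∘ deck = projA :=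
    funext fun z => (projA_eq_projA_iff.2 ⟨1, by rw [one_smul]; rfl⟩).symm
  calc deck '' (projA ⁻¹' A) = deck '' (deck ⁻¹' (projA ⁻¹' A)) := by
        rw [← Set.preimage_comp, hproj]
    _ = projA ⁻¹' A := Set.image_preimage_eq _ deck.surjective

variable {f : Ann ≃ₜ Ann} {G : (ℝ × ℝ) ≃ₜ (ℝ × ℝ)}

namespace IsLiftA

theorem commute_deck (hG : IsLiftA f G) : Commute deck G :=
  Homeomorph.ext fun z => (hG.2 z).symm

theorem projA_deck_zpow_mul_pow (hG : IsLiftA f G) (l : ℤ) (m : ℕ) (z : ℝ × ℝ) :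
    projA ((deck ^ l * G ^ m) z) = f^[m] (projA z) := by
  have hsemi : Function.Semiconj projA G f := hG.1
  rw [Homeomorph.mul_apply, deck_zpow_apply, ← projA_eq_projA_iff.2 ⟨l, rfl⟩, coe_homeomorph_pow]
  exact hsemi.iterate_right m z

theorem mem_homeoStabilizer_preimage (hG : IsLiftA f G) {A : Set Ann} (hA : f '' A = A) :
    G ∈ homeoStabilizer (projA ⁻¹' A) := by
  have hproj : projA ∘ G = f ∘ projA := funext hG.1
  calc G '' (projA ⁻¹' A) = G '' (G ⁻¹' (projA ⁻¹' A)) := by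
        rw [← Set.preimage_comp, hproj, Set.preimage_comp, ← hA, f.preimage_image, hA]
    _ = projA ⁻¹' A := Set.image_preimage_eq _ G.surjective

theorem exists_return (hG : IsLiftA f G) (hnw : NonWandering f) {V : Set (ℝ × ℝ)}
    (hV : IsOpen V) (hne : V.Nonempty) :
    ∃ m : ℕ, 1 ≤ m ∧ ∃ l : ℤ, ∃ z ∈ V, (deck ^ l * G ^ m) z ∈ V := by
  obtain ⟨m, hm, _, ⟨_, ⟨z, hz, rfl⟩, rfl⟩, w, hw, hwz⟩ :=
    hnw (projA '' V) (isOpenMap_projA V hV) (hne.image _)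
  rw [← hG.projA_deck_zpow_mul_pow 0, zpow_zero, one_mul, eq_comm, projA_eq_projA_iff] at hwz
  obtain ⟨l, rfl⟩ := hwz
  exact ⟨m, hm, l, z, hz, by rwa [Homeomorph.mul_apply, deck_zpow_apply]⟩

/-- Every return to `D` is made by an element of the stabiliser of `D` in `⟨deck, G⟩`, and the part
of that stabiliser lying over forward iterates of `f` is generated by one element. -/
theorem exists_nonWanderingOn (hG : IsLiftA f G) (hnw : NonWandering f) {A : Set Ann}
    (hA : IsOpen A) (hfA : f '' A = A) {x : ℝ × ℝ} (hx : x ∈ projA ⁻¹' A)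
    (hdeck : ∀ k : ℤ, deck ^ k ∈ homeoStabilizer (connectedComponentIn (projA ⁻¹' A) x) → k = 0) :
    ∃ n : ℕ, 1 ≤ n ∧ ∃ k : ℤ,
      NonWanderingOn (deck ^ k * G ^ n : (ℝ × ℝ) ≃ₜ (ℝ × ℝ))
        (connectedComponentIn (projA ⁻¹' A) x) := by
  set D := connectedComponentIn (projA ⁻¹' A) x
  have hD : IsOpen D := (hA.preimage continuous_projA).connectedComponentIn
  have hmem {m : ℕ} {l : ℤ} {z : ℝ × ℝ} (hz : z ∈ D) (hz' : (deck ^ l * G ^ m) z ∈ D) :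
      deck ^ l * G ^ m ∈ homeoStabilizer D :=
    mem_homeoStabilizer_connectedComponentIn
      (mul_mem (zpow_mem (deck_mem_homeoStabilizer_preimage A) l)
        (pow_mem (hG.mem_homeoStabilizer_preimage hfA) m)) hz hz'
  obtain ⟨m, hm, l, z, hz, hz'⟩ := hG.exists_return hnw hD ⟨x, mem_connectedComponentIn hx⟩
  obtain ⟨n, hn, k, hgen⟩ :=
    exists_zpow_mul_pow_generator hG.commute_deck hdeck ⟨m, hm, l, hmem hz hz'⟩
  refine ⟨n, hn, k, fun V hVD hV hne => ?_⟩
  obtain ⟨m, hm, l, z, hz, hz'⟩ := hG.exists_return hnw hV hne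
  obtain ⟨q, rfl, hq⟩ := hgen m l (hmem (hVD hz) (hVD hz'))
  exact ⟨q, Nat.pos_of_mul_pos_left hm, z, hz, by rwa [← coe_homeomorph_pow, ← hq]⟩

end IsLiftA

theorem IsCircloidA.eq_zero_of_deck_zpow_mem {C : Set Ann} (hC : IsCircloidA C) {x : ℝ × ℝ}
    (hx : x ∈ projA ⁻¹' interior C) {k : ℤ}
    (hk : deck ^ k ∈ homeoStabilizer (connectedComponentIn (projA ⁻¹' interior C) x)) :
    k = 0 := by
  obtain ⟨n, hn⟩ := k.eq_nat_or_neg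
  have hpow : deck ^ (n : ℤ) ∈ homeoStabilizer (connectedComponentIn (projA ⁻¹' interior C) x) := by
    rcases hn with rfl | rfl
    · exact hk
    · rwa [zpow_neg, inv_mem_iff] at hk
  have htranslate : x + ((n : ℝ), 0) ∈ connectedComponentIn (projA ⁻¹' interior C) x := by
    have himage : (deck ^ (n : ℤ)) x ∈ _ := hpow.subset ⟨x, mem_connectedComponentIn hx, rfl⟩
    rw [deck_zpow_apply] at himage
    simpa using himage
  have hn0 : n = 0 := by
    by_contra hn0
    exact hC.add_natCast_notMem_connectedComponentIn hx hn0 htranslate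
  lia

end Lifts

/-- **Corollary 3.6.**  An invariant circloid of a non-wandering annular homeomorphism
homotopic to the identity and without periodic points has empty interior. -/
theorem statement14 (f : Ann ≃ₜ Ann) (G : (ℝ × ℝ) ≃ₜ (ℝ × ℝ)) (hG : IsLiftA f G)
    (hnw : NonWandering (⇑f)) (hnp : ¬ HasPeriodicPoint (⇑f))
    (C : Set Ann) (hC : IsCircloidA C) (hCinv : f '' C = C) :
    interior C = ∅ := by
  by_contra hne
  obtain ⟨y, hy⟩ := Set.nonempty_iff_ne_empty.2 hne
  obtain ⟨x, rfl⟩ := surjective_projA y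
  have hfint : f '' interior C = interior C := by rw [f.image_interior, hCinv]
  obtain ⟨n, hn, k, hrec⟩ := hG.exists_nonWanderingOn hnw isOpen_interior hfint hy
    fun _ => hC.eq_zero_of_deck_zpow_mem hy
  obtain ⟨z, hz⟩ := hrec.exists_apply_apply_eq_self
    (isOpen_interior.preimage continuous_projA).connectedComponentIn
    ⟨x, mem_connectedComponentIn hy⟩ Complex.equivRealProdCLM.symm.toHomeomorph
  refine hnp ⟨projA z, n + n, by lia, ?_⟩
  rw [Function.iterate_add_apply, ← hG.projA_deck_zpow_mul_pow k,
    ← hG.projA_deck_zpow_mul_pow k, hz]
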